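/- arXiv:2407.19431 — 4 statements merged into one kernel-verified Lean document; each statement's English description precedes it below -/
import Mathlib

section
/- Let G₁ = (V₁, E₁, ends₁) and G₂ = (V₂, E₂, ends₂) be multigraphs without isolated vertices (every vertex is an endpoint of some edge). Then the external bizonotopal algebras B_{G₁}^e and B_{G₂}^e are isomorphic as ℚ-algebras if and only if G₁ and G₂ are isomorphic as multigraphs, i.e., there exist bijections α : V₁ ≃ V₂ and β : E₁ ≃ E₂ with ends₂(β e) = Sym2.map α (ends₁ e) for all e ∈ E₁. -/
open Finset MvPolynomial

/-- The degree `κ_S` of a subset `S` of vertices of a multigraph `(V, E, ends)`. -/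
def multigraphKappa {V E : Type*} [Fintype E] [DecidableEq V]
    (ends : E → Sym2 V) (S : Finset V) : ℕ :=
  (Finset.univ.filter fun e => ∃ v ∈ S, v ∈ ends e).card

/-- The defining ideal of the external bizonotopal algebra: generated by the
monomials `∏_{v∈S} z_v^{a_v}` with `S` nonempty and `∑_{v∈S} a_v = κ_S + 1`. -/
noncomputable def externalIdeal {V E : Type*} [Fintype E] [DecidableEq V]
    (ends : E → Sym2 V) : Ideal (MvPolynomial V ℚ) :=
  Ideal.span {m : MvPolynomial V ℚ |
    ∃ (S : Finset V) (a : V → ℕ), S.Nonempty ∧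
      (∑ v ∈ S, a v = multigraphKappa ends S + 1) ∧
      m = ∏ v ∈ S, X v ^ a v}

/-- The external bizonotopal algebra `B_G^e` of a multigraph. -/
def externalBizonotopal {V E : Type*} [Fintype E] [DecidableEq V]
    (ends : E → Sym2 V) : Type _ :=
  MvPolynomial V ℚ ⧸ externalIdeal ends

noncomputable instance {V E : Type*} [Fintype E] [DecidableEq V] (ends : E → Sym2 V) :
    CommRing (externalBizonotopal ends) :=
  Ideal.Quotient.commRing _

noncomputable instance {V E : Type*} [Fintype E] [DecidableEq V] (ends : E → Sym2 V) :
    Algebra ℚ (externalBizonotopal ends) :=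
  Ideal.Quotient.algebra _

/-!
The function `κ` on sets of vertices determines the multigraph up to isomorphism, because the number
of edges joining two given vertices is obtained from `κ` by inclusion–exclusion. The algebra in turn
determines `κ`. A linear combination `p` of the `z_v`, `v ∈ S`, satisfies `p ^ (κ_S + 1) = 0`, while
if the linear part of `p` involves all the variables in `T` then `p ^ κ_T ≠ 0`: orienting each edge
that meets `T` towards a vertex of `T` produces a monomial of degree `κ_T` that occurs in `p ^ κ_T`
and lies outside the monomial ideal. Without isolated vertices the ideal has no linear part, so an
isomorphism acts on linear parts by an invertible matrix, and a nonzero term in the expansion of its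
determinant is a bijection `σ` with all entries `(v, σ v)` nonzero. Applied to a generic combination
of the `z_v`, `v ∈ S`, the two facts above give `κ_{σ S} ≤ κ_S`; the same holds for the inverse, and
summing over all `S` turns the inequalities into equalities.
-/

section Algebra

lemma apply_equiv_eq_of_forall_le {α β M : Type*} [Finite α] [AddCommMonoid M] [PartialOrder M]
    [IsOrderedCancelAddMonoid M] {f : α → M} {g : β → M} (e : α ≃ β) (e' : β ≃ α)
    (h : ∀ a, g (e a) ≤ f a) (h' : ∀ b, f (e' b) ≤ g b) (a : α) : g (e a) = f a := by
  have := Fintype.ofFinite α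
  have := Fintype.ofEquiv α e
  have hsum : ∑ a, f a ≤ ∑ a, g (e a) := calc
    ∑ a, f a = ∑ b, f (e' b) := (e'.sum_comp f).symm
    _ ≤ ∑ b, g b := sum_le_sum fun b _ => h' b
    _ = ∑ a, g (e a) := (e.sum_comp g).symm
  exact (sum_eq_sum_iff_of_le fun a _ => h a).mp ((sum_le_sum fun a _ => h a).antisymm hsum)
    a (mem_univ a)

lemma pow_sub_pow_mem_pow_succ {R : Type*} [CommRing R] {I : Ideal R} {a b : R} (ha : a ∈ I)
    (hb : b ∈ I) (hab : a - b ∈ I ^ 2) (n : ℕ) : a ^ n - b ^ n ∈ I ^ (n + 1) := by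
  induction n with
  | zero => simp
  | succ n ih =>
    have hsplit : a ^ (n + 1) - b ^ (n + 1) = a ^ n * (a - b) + (a ^ n - b ^ n) * b := by ring
    rw [hsplit]
    refine add_mem ?_ ?_
    · simpa only [← pow_add] using Ideal.mul_mem_mul (Ideal.pow_mem_pow ha n) hab
    · simpa only [← pow_succ] using Ideal.mul_mem_mul ih hb

lemma exists_perm_forall_apply_ne_zero {n R : Type*} [Fintype n] [DecidableEq n] [CommRing R]
    {A : Matrix n n R} (hA : A.det ≠ 0) : ∃ π : Equiv.Perm n, ∀ i, A i (π i) ≠ 0 := by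
  rw [← Matrix.det_transpose, Matrix.det_apply] at hA
  obtain ⟨π, -, hπ⟩ := exists_ne_zero_of_sum_ne_zero hA
  refine ⟨π, fun i hi => hπ ?_⟩
  rw [prod_eq_zero (mem_univ i) hi, smul_zero]

lemma exists_equiv_forall_apply_ne_zero {m n R : Type*} [Fintype m] [DecidableEq m] [Fintype n]
    [DecidableEq n] [CommRing R] [Nontrivial R] {A : Matrix m n R} {B : Matrix n m R}
    (hAB : A * B = 1) (hBA : B * A = 1) : ∃ σ : m ≃ n, ∀ i, A i (σ i) ≠ 0 := by
  let e : m ≃ n := Fintype.equivOfCardEq (Matrix.square_of_invertible A B hAB hBA)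
  have hinv : A.submatrix id e * B.submatrix e id = 1 := by
    rw [Matrix.submatrix_mul_equiv, hAB, Matrix.submatrix_id_id]
  obtain ⟨π, hπ⟩ := exists_perm_forall_apply_ne_zero (Matrix.det_ne_zero_of_right_inverse hinv)
  exact ⟨π.trans e, hπ⟩

lemma exists_forall_sum_mul_ne_zero {m n K : Type*} [Field K] [Infinite K] (A : Matrix m n K)
    (S : Finset m) {σ : m → n} (hσ : ∀ i ∈ S, A i (σ i) ≠ 0) :
    ∃ c : m → K, ∀ i ∈ S, ∑ j ∈ S, c j * A j (σ i) ≠ 0 := by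
  classical
  obtain ⟨c, hc⟩ := Module.Dual.exists_forall_ne_zero_of_forall_exists
    (fun i : S => (∑ j ∈ S, A j (σ i) • LinearMap.proj j : Module.Dual K (m → K)))
    fun i => ⟨Pi.single i 1, by simpa [Pi.single_apply] using hσ i i.2⟩
  exact ⟨c, fun i hi => by simpa [mul_comm] using hc ⟨i, hi⟩⟩

end Algebra

section LinearPart

variable {R σ τ υ : Type*} [CommRing R]

lemma mem_idealOfVars_iff {p : MvPolynomial σ R} : p ∈ idealOfVars σ R ↔ coeff 0 p = 0 := by
  rw [← pow_one (idealOfVars σ R), mem_pow_idealOfVars_iff']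
  simp [Finsupp.degree_eq_zero_iff]

lemma idealOfVars_isPrime [IsDomain R] : (idealOfVars σ R).IsPrime := by
  have hker : idealOfVars σ R = RingHom.ker (constantCoeff : MvPolynomial σ R →+* R) :=
    Ideal.ext fun p => mem_idealOfVars_iff
  exact hker ▸ RingHom.ker_isPrime _

lemma coeff_single_of_sub_mem_sq {p q : MvPolynomial σ R} (h : p - q ∈ idealOfVars σ R ^ 2)
    (i : σ) : coeff (Finsupp.single i 1) p = coeff (Finsupp.single i 1) q := by
  rw [← sub_eq_zero, ← coeff_sub]
  exact (mem_pow_idealOfVars_iff' 2 _).mp h _ (by simp)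

lemma homogeneousComponent_one_eq_sum [Fintype σ] (p : MvPolynomial σ R) :
    homogeneousComponent 1 p = ∑ i, coeff (Finsupp.single i 1) p • X i := by
  classical
  ext d
  rw [coeff_homogeneousComponent, coeff_sum]
  simp only [coeff_smul, smul_eq_mul, coeff_X, mul_ite, mul_one, mul_zero]
  split_ifs with hd
  · obtain ⟨i, rfl⟩ := Finsupp.range_single_one.ge hd
    simp [Finsupp.single_left_inj]
  · refine (sum_eq_zero fun i _ => if_neg ?_).symm
    rintro rfl
    exact hd (by simp)

lemma sub_homogeneousComponent_one_mem_sq {p : MvPolynomial σ R} (hp : p ∈ idealOfVars σ R) :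
    p - homogeneousComponent 1 p ∈ idealOfVars σ R ^ 2 := by
  rw [mem_pow_idealOfVars_iff']
  intro d hd
  rw [coeff_sub, coeff_homogeneousComponent]
  split_ifs with hd1
  · exact sub_self _
  · have hd0 : d = 0 := d.degree_eq_zero_iff.mp (by lia)
    rw [hd0, mem_idealOfVars_iff.mp hp, sub_zero]

lemma coeff_pow_degree [Finite σ] {p : MvPolynomial σ R} (hp : p ∈ idealOfVars σ R)
    (d : σ →₀ ℕ) : coeff d (p ^ d.degree) =
      d.multinomial * d.prod fun i k => coeff (Finsupp.single i 1) p ^ k := by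
  have := Fintype.ofFinite σ
  have hlin : homogeneousComponent 1 p ∈ idealOfVars σ R := by
    rw [mem_idealOfVars_iff, coeff_homogeneousComponent]
    simp
  have hpow := pow_sub_pow_mem_pow_succ hp hlin (sub_homogeneousComponent_one_mem_sq hp) d.degree
  have hcoeff := (mem_pow_idealOfVars_iff' _ _).mp hpow d (Nat.lt_succ_self _)
  rw [coeff_sub, sub_eq_zero] at hcoeff
  rw [hcoeff, homogeneousComponent_one_eq_sum, coeff_linearCombination_X_pow_of_fintype, if_pos]
  rfl

lemma idealOfVars_le_comap_of_pow_mem {S : Type*} [CommRing S] {J : Ideal S} (hJ : J.IsPrime)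
    {F : MvPolynomial σ R →+* S} (h : ∀ i, ∃ n, F (X i) ^ n ∈ J) :
    idealOfVars σ R ≤ J.comap F := by
  rw [idealOfVars, Ideal.span_le]
  rintro _ ⟨i, rfl⟩
  obtain ⟨n, hn⟩ := h i
  exact Ideal.mem_comap.mpr (hJ.mem_of_pow_mem n hn)

lemma coeff_single_algHom [Fintype σ] {F : MvPolynomial σ R →ₐ[R] MvPolynomial τ R}
    (hF : idealOfVars σ R ≤ (idealOfVars τ R).comap F) {p : MvPolynomial σ R}
    (hp : p ∈ idealOfVars σ R) (j : τ) : coeff (Finsupp.single j 1) (F p) =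
      ∑ i, coeff (Finsupp.single i 1) p * coeff (Finsupp.single j 1) (F (X i)) := by
  have hsq : F p - F (homogeneousComponent 1 p) ∈ idealOfVars τ R ^ 2 := by
    rw [← map_sub]
    exact (Ideal.pow_right_mono hF 2).trans (Ideal.le_comap_pow _ 2)
      (sub_homogeneousComponent_one_mem_sq hp)
  rw [coeff_single_of_sub_mem_sq hsq, homogeneousComponent_one_eq_sum]
  simp [coeff_sum]

/-- The matrix of linear coefficients of a substitution `F`: the entry at `(i, j)` is the
coefficient of the variable `X j` in `F (X i)`. When `F` preserves the ideal of the variables, it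
describes the action of `F` on linear parts. -/
noncomputable def linearMatrix (F : MvPolynomial σ R →ₐ[R] MvPolynomial τ R) : Matrix σ τ R :=
  Matrix.of fun i j => coeff (Finsupp.single j 1) (F (X i))

lemma linearMatrix_comp [Fintype τ] {F : MvPolynomial σ R →ₐ[R] MvPolynomial τ R}
    {G : MvPolynomial τ R →ₐ[R] MvPolynomial υ R}
    (hF : idealOfVars σ R ≤ (idealOfVars τ R).comap F)
    (hG : idealOfVars τ R ≤ (idealOfVars υ R).comap G) :
    linearMatrix (G.comp F) = linearMatrix F * linearMatrix G := by
  ext i k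
  exact coeff_single_algHom hG (hF (Ideal.subset_span ⟨i, rfl⟩)) k

lemma linearMatrix_eq_one [DecidableEq σ] {F : MvPolynomial σ R →ₐ[R] MvPolynomial σ R}
    (hF : ∀ p, F p - p ∈ idealOfVars σ R ^ 2) : linearMatrix F = 1 := by
  ext i j
  rw [linearMatrix, Matrix.of_apply, coeff_single_of_sub_mem_sq (hF (X i)), Matrix.one_apply]
  simp [coeff_X, Finsupp.single_left_inj]

lemma exists_algHom_comp_eq_of_surjective {A B : Type*} [CommRing A] [Algebra R A] [CommRing B]
    [Algebra R B] {g : A →ₐ[R] B} (hg : Function.Surjective g) (f : MvPolynomial σ R →ₐ[R] B) :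
    ∃ F : MvPolynomial σ R →ₐ[R] A, g.comp F = f := by
  choose P hP using fun i => hg (f (X i))
  exact ⟨aeval P, algHom_ext fun i => by simp [hP]⟩

lemma exists_algHom_lifts_of_quotient_algEquiv {I : Ideal (MvPolynomial σ R)}
    {J : Ideal (MvPolynomial τ R)} (φ : (MvPolynomial σ R ⧸ I) ≃ₐ[R] (MvPolynomial τ R ⧸ J)) :
    ∃ (F : MvPolynomial σ R →ₐ[R] MvPolynomial τ R) (G : MvPolynomial τ R →ₐ[R] MvPolynomial σ R),
      I ≤ J.comap F ∧ J ≤ I.comap G ∧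
        (∀ p, G.comp F p - p ∈ I) ∧ ∀ q, F.comp G q - q ∈ J := by
  obtain ⟨F, hF⟩ := exists_algHom_comp_eq_of_surjective (Ideal.Quotient.mkₐ_surjective R J)
    ((φ : _ →ₐ[R] _).comp (Ideal.Quotient.mkₐ R I))
  obtain ⟨G, hG⟩ := exists_algHom_comp_eq_of_surjective (Ideal.Quotient.mkₐ_surjective R I)
    ((φ.symm : _ →ₐ[R] _).comp (Ideal.Quotient.mkₐ R J))
  replace hF (p) : Ideal.Quotient.mk J (F p) = φ (Ideal.Quotient.mk I p) := DFunLike.congr_fun hF p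
  replace hG (q) : Ideal.Quotient.mk I (G q) = φ.symm (Ideal.Quotient.mk J q) :=
    DFunLike.congr_fun hG q
  refine ⟨F, G, fun p hp => ?_, fun q hq => ?_, fun p => ?_, fun q => ?_⟩
  · exact Ideal.mem_comap.mpr <| Ideal.Quotient.eq_zero_iff_mem.mp <| by
      rw [hF, Ideal.Quotient.eq_zero_iff_mem.mpr hp, map_zero]
  · exact Ideal.mem_comap.mpr <| Ideal.Quotient.eq_zero_iff_mem.mp <| by
      rw [hG, Ideal.Quotient.eq_zero_iff_mem.mpr hq, map_zero]
  · exact Ideal.Quotient.eq.mp <| by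
      rw [AlgHom.comp_apply, hG, hF, AlgEquiv.symm_apply_apply]
  · exact Ideal.Quotient.eq.mp <| by
      rw [AlgHom.comp_apply, hF, hG, AlgEquiv.apply_symm_apply]

end LinearPart

section DegreeFunction

variable {V E V₁ E₁ V₂ E₂ : Type*} [DecidableEq V] [Fintype E] [DecidableEq V₁] [Fintype E₁]
  [DecidableEq V₂] [Fintype E₂]

lemma multigraphKappa_map {ends₁ : E₁ → Sym2 V₁} {ends₂ : E₂ → Sym2 V₂} {α : V₁ ≃ V₂} {β : E₁ ≃ E₂}
    (h : ∀ e, ends₂ (β e) = Sym2.map α (ends₁ e)) (S : Finset V₁) :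
    multigraphKappa ends₂ (S.map α.toEmbedding) = multigraphKappa ends₁ S :=
  (card_equiv β fun e => by simp [h, Sym2.mem_map]).symm

lemma multigraphKappa_pair_add_card (ends : E → Sym2 V) {u v : V} (huv : u ≠ v) :
    multigraphKappa ends {u, v} + #{e | ends e = s(u, v)} =
      multigraphKappa ends {u} + multigraphKappa ends {v} := by
  classical
  simp only [multigraphKappa, mem_insert, mem_singleton, exists_eq_or_imp, exists_eq_left,
    ← Sym2.mem_and_mem_iff huv, filter_or, filter_and]
  exact card_union_add_card_inter _ _

lemma card_loops_add_multigraphKappa_compl [Fintype V] (ends : E → Sym2 V) (v : V) :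
    #{e | ends e = s(v, v)} + multigraphKappa ends {v}ᶜ = multigraphKappa ends univ := by
  have hloop (x : Sym2 V) : x = s(v, v) ↔ ¬ ∃ w ∈ ({v}ᶜ : Finset V), w ∈ x := by
    induction x with | _ a b => simp [and_or_left, exists_or]
  have huniv (e : E) : ∃ w ∈ (univ : Finset V), w ∈ ends e :=
    ⟨_, mem_univ _, Sym2.out_fst_mem _⟩
  simp only [multigraphKappa, hloop, huniv, filter_true]
  rw [add_comm, card_filter_add_card_filter_not]

lemma card_edges_eq_of_multigraphKappa_eq [Finite V] {ends₁ : E₁ → Sym2 V} {ends₂ : E₂ → Sym2 V}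
    (h : ∀ S, multigraphKappa ends₁ S = multigraphKappa ends₂ S) (s : Sym2 V) :
    #{e | ends₁ e = s} = #{e | ends₂ e = s} := by
  have := Fintype.ofFinite V
  induction s with | _ u v
  obtain rfl | huv := eq_or_ne u v
  · have h₁ := card_loops_add_multigraphKappa_compl ends₁ u
    have h₂ := card_loops_add_multigraphKappa_compl ends₂ u
    rw [h, h] at h₁
    lia
  · have h₁ := multigraphKappa_pair_add_card ends₁ huv
    have h₂ := multigraphKappa_pair_add_card ends₂ huv
    rw [h, h, h] at h₁
    lia

lemma exists_edge_equiv_iff_multigraphKappa_map_eq [Finite V₂] (ends₁ : E₁ → Sym2 V₁)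
    (ends₂ : E₂ → Sym2 V₂) (α : V₁ ≃ V₂) :
    (∃ β : E₁ ≃ E₂, ∀ e, ends₂ (β e) = Sym2.map α (ends₁ e)) ↔
      ∀ S, multigraphKappa ends₂ (S.map α.toEmbedding) = multigraphKappa ends₁ S := by
  refine ⟨fun ⟨_, hβ⟩ => multigraphKappa_map hβ, fun h => ?_⟩
  have hκ (S : Finset V₂) :
      multigraphKappa (fun e => Sym2.map α (ends₁ e)) S = multigraphKappa ends₂ S := by
    obtain ⟨T, rfl⟩ := α.finsetCongr.surjective S
    exact (multigraphKappa_map (β := Equiv.refl E₁) (fun _ => rfl) T).trans (h T).symm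
  have hfiber (s : Sym2 V₂) :
      Fintype.card {e // Sym2.map α (ends₁ e) = s} = Fintype.card {e // ends₂ e = s} := by
    simpa only [Fintype.card_subtype] using card_edges_eq_of_multigraphKappa_eq hκ s
  exact ⟨Equiv.ofFiberEquiv fun s => Fintype.equivOfCardEq (hfiber s),
    Equiv.ofFiberEquiv_map _⟩

lemma exists_exponent_degree_eq_multigraphKappa (ends : E → Sym2 V) (T : Finset V) :
    ∃ a : V →₀ ℕ, a.support ⊆ T ∧ a.degree = multigraphKappa ends T ∧
      ∀ U : Finset V, ∑ v ∈ U, a v ≤ multigraphKappa ends U := by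
  have hhead (e : E) : ∃ v ∈ ends e, (∃ w ∈ T, w ∈ ends e) → v ∈ T := by
    by_cases he : ∃ w ∈ T, w ∈ ends e
    · obtain ⟨w, hwT, hw⟩ := he
      exact ⟨w, hw, fun _ => hwT⟩
    · exact ⟨_, Sym2.out_fst_mem _, fun h => absurd h he⟩
  choose head hmem hT using hhead
  refine ⟨∑ e with ∃ w ∈ T, w ∈ ends e, Finsupp.single (head e) 1, ?_, ?_, fun U => ?_⟩
  · refine Finsupp.support_finsetSum.trans (Finset.biUnion_subset.mpr fun e he => ?_)
    exact Finsupp.support_single_subset.trans (by simpa using hT e (mem_filter.mp he).2)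
  · simp [multigraphKappa]
  · simp only [Finsupp.finsetSum_apply, Finsupp.single_apply]
    rw [sum_comm]
    simp only [sum_ite_eq, ← card_filter, multigraphKappa]
    exact card_le_card fun e he => by
      simpa using ⟨head e, (mem_filter.mp he).2, hmem e⟩

end DegreeFunction

section ExternalIdeal

variable {V E V₁ E₁ V₂ E₂ : Type*} [DecidableEq V] [Fintype E] [DecidableEq V₁] [Fintype E₁]
  [DecidableEq V₂] [Fintype E₂]

lemma exists_multigraphKappa_lt_of_coeff_ne_zero {ends : E → Sym2 V} {p : MvPolynomial V ℚ}
    (hp : p ∈ externalIdeal ends) {d : V →₀ ℕ} (hd : coeff d p ≠ 0) :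
    ∃ S : Finset V, S.Nonempty ∧ multigraphKappa ends S < ∑ v ∈ S, d v := by
  have hle : externalIdeal ends ≤ Ideal.span ((fun s => monomial s (1 : ℚ)) ''
      {s | ∃ S : Finset V, S.Nonempty ∧ multigraphKappa ends S < ∑ v ∈ S, s v}) := by
    refine Ideal.span_mono ?_
    rintro _ ⟨S, a, hS, ha, rfl⟩
    refine ⟨∑ v ∈ S, Finsupp.single v (a v), ⟨S, hS, ?_⟩, ?_⟩
    · simp +contextual [Finsupp.finsetSum_apply, Finsupp.single_apply, ha]
    · simp [monomial_sum_one, X_pow_eq_monomial]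
  obtain ⟨s, ⟨S, hS, hlt⟩, hsd⟩ :=
    mem_ideal_span_monomial_image.mp (hle hp) d (mem_support_iff.mpr hd)
  exact ⟨S, hS, hlt.trans_le (sum_le_sum fun v _ => hsd v)⟩

lemma externalIdeal_le_pow_idealOfVars {ends : E → Sym2 V} {k : ℕ}
    (hk : ∀ S : Finset V, S.Nonempty → k ≤ multigraphKappa ends S) :
    externalIdeal ends ≤ idealOfVars V ℚ ^ (k + 1) := by
  intro p hp
  rw [mem_pow_idealOfVars_iff]
  intro d hd
  obtain ⟨S, hS, hlt⟩ := exists_multigraphKappa_lt_of_coeff_ne_zero hp (mem_support_iff.mp hd)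
  have hdeg : ∑ v ∈ S, d v ≤ d.degree :=
    sum_le_sum_of_ne_zero fun v _ hv => Finsupp.mem_support_iff.mpr hv
  exact (hk S hS).trans_lt (hlt.trans_le hdeg)

lemma externalIdeal_le_idealOfVars (ends : E → Sym2 V) :
    externalIdeal ends ≤ idealOfVars V ℚ := by
  simpa using externalIdeal_le_pow_idealOfVars (ends := ends) (k := 0) fun _ _ => zero_le

lemma externalIdeal_le_idealOfVars_sq {ends : E → Sym2 V} (h : ∀ v, ∃ e, v ∈ ends e) :
    externalIdeal ends ≤ idealOfVars V ℚ ^ 2 := by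
  refine externalIdeal_le_pow_idealOfVars fun S ⟨v, hv⟩ => ?_
  obtain ⟨e, he⟩ := h v
  exact card_pos.mpr ⟨e, mem_filter.mpr ⟨mem_univ e, v, hv, he⟩⟩

lemma sum_smul_X_pow_mem_externalIdeal (ends : E → Sym2 V) {S : Finset V}
    (hS : S.Nonempty) (c : V → ℚ) :
    (∑ v ∈ S, c v • X v) ^ (multigraphKappa ends S + 1) ∈ externalIdeal ends := by
  rw [sum_pow_eq_sum_piAntidiag]
  refine Ideal.sum_mem _ fun a ha => Ideal.mul_mem_left _ _ ?_
  simp only [smul_eq_C_mul, mul_pow, prod_mul_distrib]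
  exact Ideal.mul_mem_left _ _
    (Ideal.subset_span ⟨S, a, hS, (mem_piAntidiag.mp ha).1, rfl⟩)

lemma multigraphKappa_lt_of_pow_mem_externalIdeal [Finite V] {ends : E → Sym2 V}
    {p : MvPolynomial V ℚ} (hp : p ∈ idealOfVars V ℚ) {n : ℕ} (hpn : p ^ n ∈ externalIdeal ends)
    {T : Finset V} (hT : ∀ v ∈ T, coeff (Finsupp.single v 1) p ≠ 0) :
    multigraphKappa ends T < n := by
  by_contra! hn
  obtain ⟨a, haT, hdeg, hle⟩ := exists_exponent_degree_eq_multigraphKappa ends T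
  have hmem : p ^ a.degree ∈ externalIdeal ends := Ideal.pow_mem_of_pow_mem _ hpn (hdeg ▸ hn)
  have hcoeff : coeff a (p ^ a.degree) ≠ 0 := by
    rw [coeff_pow_degree hp]
    exact mul_ne_zero (Nat.cast_ne_zero.mpr (Nat.multinomial_pos _ _).ne')
      (prod_ne_zero_iff.mpr fun v hv => pow_ne_zero _ (hT v (haT hv)))
  obtain ⟨S, -, hS⟩ := exists_multigraphKappa_lt_of_coeff_ne_zero hmem hcoeff
  exact (hle S).not_gt hS

lemma idealOfVars_le_comap_of_externalIdeal_le {ends₁ : E₁ → Sym2 V₁} {ends₂ : E₂ → Sym2 V₂}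
    {F : MvPolynomial V₁ ℚ →ₐ[ℚ] MvPolynomial V₂ ℚ}
    (hF : externalIdeal ends₁ ≤ (externalIdeal ends₂).comap F) :
    idealOfVars V₁ ℚ ≤ (idealOfVars V₂ ℚ).comap F := by
  refine idealOfVars_le_comap_of_pow_mem idealOfVars_isPrime fun v =>
    ⟨multigraphKappa ends₁ {v} + 1, ?_⟩
  have hv := sum_smul_X_pow_mem_externalIdeal ends₁ (singleton_nonempty v) 1
  simpa using externalIdeal_le_idealOfVars ends₂ (hF hv)

lemma multigraphKappa_image_le [Finite V₂] {ends₁ : E₁ → Sym2 V₁} {ends₂ : E₂ → Sym2 V₂}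
    {F : MvPolynomial V₁ ℚ →ₐ[ℚ] MvPolynomial V₂ ℚ}
    (hF : externalIdeal ends₁ ≤ (externalIdeal ends₂).comap F) {σ : V₁ → V₂}
    (hσ : ∀ v, linearMatrix F v (σ v) ≠ 0) (S : Finset V₁) :
    multigraphKappa ends₂ (S.image σ) ≤ multigraphKappa ends₁ S := by
  obtain rfl | hS := S.eq_empty_or_nonempty
  · simp [multigraphKappa]
  obtain ⟨c, hc⟩ := exists_forall_sum_mul_ne_zero (linearMatrix F) S fun v _ => hσ v
  have hvars : ∑ v ∈ S, c v • X v ∈ idealOfVars V₁ ℚ :=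
    sum_mem fun v _ => Submodule.smul_of_tower_mem _ _ (Ideal.subset_span ⟨v, rfl⟩)
  refine Nat.lt_succ_iff.mp <| multigraphKappa_lt_of_pow_mem_externalIdeal
    (p := F (∑ v ∈ S, c v • X v)) (idealOfVars_le_comap_of_externalIdeal_le hF hvars) ?_ ?_
  · rw [← map_pow]
    exact hF (sum_smul_X_pow_mem_externalIdeal ends₁ hS c)
  · intro w hw
    obtain ⟨v, hv, rfl⟩ := mem_image.mp hw
    simpa [linearMatrix, coeff_sum] using hc v hv

lemma exists_equiv_multigraphKappa_map_eq [Finite V₁] [Finite V₂] {ends₁ : E₁ → Sym2 V₁}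
    {ends₂ : E₂ → Sym2 V₂} (h₁ : ∀ v, ∃ e, v ∈ ends₁ e) (h₂ : ∀ v, ∃ e, v ∈ ends₂ e)
    (φ : externalBizonotopal ends₁ ≃ₐ[ℚ] externalBizonotopal ends₂) :
    ∃ α : V₁ ≃ V₂, ∀ S, multigraphKappa ends₂ (S.map α.toEmbedding) = multigraphKappa ends₁ S := by
  have := Fintype.ofFinite V₁
  have := Fintype.ofFinite V₂
  obtain ⟨F, G, hF, hG, hGF, hFG⟩ := exists_algHom_lifts_of_quotient_algEquiv φ
  have hFvars := idealOfVars_le_comap_of_externalIdeal_le hF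
  have hGvars := idealOfVars_le_comap_of_externalIdeal_le hG
  have hFG_one : linearMatrix F * linearMatrix G = 1 := by
    rw [← linearMatrix_comp hFvars hGvars]
    exact linearMatrix_eq_one fun p => externalIdeal_le_idealOfVars_sq h₁ (hGF p)
  have hGF_one : linearMatrix G * linearMatrix F = 1 := by
    rw [← linearMatrix_comp hGvars hFvars]
    exact linearMatrix_eq_one fun q => externalIdeal_le_idealOfVars_sq h₂ (hFG q)
  obtain ⟨σ, hσ⟩ := exists_equiv_forall_apply_ne_zero hFG_one hGF_one
  obtain ⟨τ, hτ⟩ := exists_equiv_forall_apply_ne_zero hGF_one hFG_one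
  refine ⟨σ, apply_equiv_eq_of_forall_le σ.finsetCongr τ.finsetCongr (fun S => ?_) fun S => ?_⟩
  · simpa [map_eq_image] using multigraphKappa_image_le hF hσ S
  · simpa [map_eq_image] using multigraphKappa_image_le hG hτ S

lemma externalIdeal_eq_map_renameEquiv {ends₁ : E₁ → Sym2 V₁} {ends₂ : E₂ → Sym2 V₂}
    {α : V₁ ≃ V₂}
    (hα : ∀ S, multigraphKappa ends₂ (S.map α.toEmbedding) = multigraphKappa ends₁ S) :
    externalIdeal ends₂ = (externalIdeal ends₁).map (renameEquiv ℚ α) := by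
  rw [externalIdeal, externalIdeal, Ideal.map_span]
  congr 1
  ext m
  constructor
  · rintro ⟨S, a, hS, ha, rfl⟩
    obtain ⟨T, rfl⟩ := α.finsetCongr.surjective S
    rw [Equiv.finsetCongr_apply] at hS ha ⊢
    exact ⟨∏ v ∈ T, X v ^ a (α v), ⟨T, a ∘ α, by simpa using hS, by simpa [hα] using ha, rfl⟩,
      by simp [map_prod]⟩
  · rintro ⟨_, ⟨S, a, hS, ha, rfl⟩, rfl⟩
    exact ⟨S.map α.toEmbedding, a ∘ α.symm, by simpa using hS, by simpa [hα] using ha,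
      by simp [map_prod]⟩

end ExternalIdeal

/-- For multigraphs without isolated vertices, the external bizonotopal algebras
are isomorphic as `ℚ`-algebras if and only if the multigraphs are isomorphic. -/
theorem externalBizonotopal_iso_iff {V₁ E₁ V₂ E₂ : Type*}
    [Fintype V₁] [Fintype E₁] [DecidableEq V₁]
    [Fintype V₂] [Fintype E₂] [DecidableEq V₂]
    (ends₁ : E₁ → Sym2 V₁) (ends₂ : E₂ → Sym2 V₂)
    (h₁ : ∀ v : V₁, ∃ e : E₁, v ∈ ends₁ e)
    (h₂ : ∀ v : V₂, ∃ e : E₂, v ∈ ends₂ e) :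
    Nonempty (externalBizonotopal ends₁ ≃ₐ[ℚ] externalBizonotopal ends₂) ↔
      ∃ (α : V₁ ≃ V₂) (β : E₁ ≃ E₂), ∀ e : E₁, ends₂ (β e) = Sym2.map α (ends₁ e) := by
  simp only [exists_edge_equiv_iff_multigraphKappa_map_eq]
  constructor
  · rintro ⟨φ⟩
    exact exists_equiv_multigraphKappa_map_eq h₁ h₂ φ
  · rintro ⟨α, hα⟩
    exact ⟨Ideal.quotientEquivAlg _ _ (renameEquiv ℚ α) (externalIdeal_eq_map_renameEquiv hα)⟩
end

section
/- Let G = (V, E, ends) be a simple multigraph (ends is injective and no edge is a loop) with n = |V| ≥ 1 vertices. Then the set of extreme points of the score vector polytope P_G is finite with at most ∑_{i=1}^{n} n!/i! elements (this number equals ⌊(e−1)·n!⌋), and equality holds if and only if G is complete, i.e., ends is a bijection from E onto the set of non-diagonal elements of Sym2 V. -/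
open Finset

/-- The score vector polytope of a multigraph. -/
def scorePolytope {V E : Type*} [Fintype E] [DecidableEq V]
    (ends : E → Sym2 V) : Set (V → ℝ) :=
  {x | (∀ v : V, 0 ≤ x v) ∧
    ∀ S : Finset V, ∑ v ∈ S, x v ≤ (multigraphKappa ends S : ℝ)}

/-! The degree function `κ` of a multigraph is normalized, monotone and submodular, so `P_G` is its
polymatroid. By Edmonds' greedy algorithm, the extreme points of the polymatroid of `f` are the
greedy vectors: choose vertices one after the other and give each of them the marginal increase
of `f`. Every greedy vector is extreme because all the initial sets are tight. Conversely, at an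
extreme point the tight sets form a lattice which must separate the vertices of the support, so
that a chain of tight sets can be enlarged by one vertex at a time.

In a loopless graph a last remaining vertex contributes `0`, so the injective words of length
less than `n` suffice, and there are `∑_{k<n} n!/(n-k)!` of them. If `u` and `v` are not adjacent,
choosing `u` after all the vertices other than `u` and `v` contributes `0` as well, so two words
give the same vector. If all pairs are adjacent, then `κ` has strictly decreasing marginals and a
word can be recovered from its greedy vector. -/

section OrderedField

variable {𝕜 : Type*} [Field 𝕜] [LinearOrder 𝕜] [IsStrictOrderedRing 𝕜]

lemma left_eq_of_mem_openSegment_of_le {a b c : 𝕜} (h : c ∈ openSegment 𝕜 a b) (ha : a ≤ c)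
    (hb : b ≤ c) : a = c := by
  by_contra hac
  have hab : a ≠ b := by
    rintro rfl
    exact hac (by simpa [eq_comm] using h)
  rw [openSegment_eq_Ioo' hab] at h
  exact h.2.not_ge (max_le ha hb)

lemma left_eq_of_mem_openSegment_of_ge {a b c : 𝕜} (h : c ∈ openSegment 𝕜 a b) (ha : c ≤ a)
    (hb : c ≤ b) : a = c := by
  by_contra hac
  have hab : a ≠ b := by
    rintro rfl
    exact hac (by simpa [eq_comm] using h)
  rw [openSegment_eq_Ioo' hab] at h
  exact h.1.not_ge (le_min ha hb)

lemma exists_pos_forall_mul_abs_le {ι : Type*} [Finite ι] {c d : ι → 𝕜} (hc : ∀ i, 0 ≤ c i)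
    (hcd : ∀ i, c i = 0 → d i = 0) : ∃ ε > 0, ∀ i, ε * |d i| ≤ c i := by
  have hδ : ∀ i, 0 < if d i = 0 then 1 else c i / |d i| := fun i ↦ by
    split_ifs with hd
    · exact one_pos
    · exact div_pos ((hc i).lt_of_ne' (mt (hcd i) hd)) (abs_pos.2 hd)
  obtain ⟨ε, hε, hlt⟩ := Pi.exists_forall_pos_add_lt hδ
  refine ⟨ε, hε, fun i ↦ ?_⟩
  by_cases hd : d i = 0
  · simpa [hd] using hc i
  · have hεi := hlt i
    rw [zero_add, if_neg hd] at hεi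
    exact ((lt_div_iff₀ (abs_pos.2 hd)).1 hεi).le

end OrderedField

section Polymatroid

variable {V 𝕜 : Type*}

/-- Submodularity of a set function, in its lattice form. -/
def IsSubmodular [DecidableEq V] [Add 𝕜] [LE 𝕜] (f : Finset V → 𝕜) : Prop :=
  ∀ S T, f (S ∪ T) + f (S ∩ T) ≤ f S + f T

/-- The increase of the set function `f` when `a` is added to `S`; it is `0` when `a ∈ S`. -/
def marginal [DecidableEq V] [Sub 𝕜] (f : Finset V → 𝕜) (S : Finset V) (a : V) : 𝕜 :=
  f (insert a S) - f S

/-- Strict form of submodularity: the marginal of a vertex outside `T` is strictly smaller at `T`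
than at a proper subset of `T`. -/
def HasStrictlyDecreasingMarginals [DecidableEq V] [Sub 𝕜] [LT 𝕜] (f : Finset V → 𝕜) : Prop :=
  ∀ ⦃S T : Finset V⦄, S ⊂ T → ∀ a ∉ T, marginal f T a < marginal f S a

/-- The polymatroid of a set function `f`: the nonnegative vectors whose sum over each `S` is at
most `f S`. -/
def polymatroid [AddCommMonoid 𝕜] [LE 𝕜] (f : Finset V → 𝕜) : Set (V → 𝕜) :=
  {x | (∀ v, 0 ≤ x v) ∧ ∀ S : Finset V, ∑ v ∈ S, x v ≤ f S}

/-- The constraint of the polymatroid of `f` indexed by `S` is attained at `x`. -/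
def IsTight [AddCommMonoid 𝕜] (f : Finset V → 𝕜) (x : V → 𝕜) (S : Finset V) : Prop :=
  ∑ v ∈ S, x v = f S

/-- The vector of the greedy algorithm, in which each letter of the word `l` receives its marginal
over the letters chosen before it and all other coordinates are `0`. Words are built by `List.cons`,
so they are read from right to left: the head is chosen last. -/
def greedyVector [DecidableEq V] [AddGroup 𝕜] (f : Finset V → 𝕜) : List V → V → 𝕜
  | [] => 0
  | a :: l => Function.update (greedyVector f l) a (marginal f l.toFinset a)

lemma IsTight.of_subset [AddCommMonoid 𝕜] [PartialOrder 𝕜] {f : Finset V → 𝕜} {x : V → 𝕜}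
    {S T : Finset V} (hT : IsTight f x T) (hm : Monotone f) (hx : x ∈ polymatroid f) (hST : S ⊆ T)
    (h0 : ∀ v ∈ T, v ∉ S → x v = 0) : IsTight f x S := by
  refine (hx.2 S).antisymm ?_
  rw [sum_subset hST h0, hT]
  exact hm hST

section Greedy

variable [DecidableEq V] [AddGroup 𝕜] {f : Finset V → 𝕜} {l : List V} {a v : V}

lemma greedyVector_cons_self : greedyVector f (a :: l) a = marginal f l.toFinset a :=
  Function.update_self ..

lemma greedyVector_cons_of_ne (h : v ≠ a) : greedyVector f (a :: l) v = greedyVector f l v :=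
  Function.update_of_ne h ..

lemma greedyVector_of_notMem (hv : v ∉ l) : greedyVector f l v = 0 := by
  induction l with
  | nil => rfl
  | cons a l ih =>
    rw [List.mem_cons, not_or] at hv
    rw [greedyVector_cons_of_ne hv.1, ih hv.2]

lemma greedyVector_cons_of_marginal_eq_zero (ha : a ∉ l) (h : marginal f l.toFinset a = 0) :
    greedyVector f (a :: l) = greedyVector f l := by
  rw [greedyVector, h, ← greedyVector_of_notMem (f := f) ha, Function.update_eq_self]

lemma HasStrictlyDecreasingMarginals.marginal_lt_greedyVector [LT 𝕜]
    (hf : HasStrictlyDecreasingMarginals f) (hl : l.Nodup) (ha : a ∈ l) {S : Finset V}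
    (haS : a ∉ S) (hS : l.toFinset.erase a ⊂ S) : marginal f S a < greedyVector f l a := by
  induction l with
  | nil => simp at ha
  | cons b l ih =>
    obtain ⟨hb, hl⟩ := List.nodup_cons.1 hl
    rw [List.toFinset_cons] at hS
    obtain rfl | hab := eq_or_ne a b
    · rw [erase_insert (by simpa using hb)] at hS
      rw [greedyVector_cons_self]
      exact hf hS a haS
    · rw [greedyVector_cons_of_ne hab]
      exact ih hl (List.mem_of_ne_of_mem hab ha)
        ((erase_subset_erase a (subset_insert b _)).trans_ssubset hS)

/-- Two words with the same letters ending in different letters `a` and `b` would give `a` different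
marginals, since the second word chooses `a` before `b`. -/
lemma HasStrictlyDecreasingMarginals.head_eq_of_greedyVector_eq [Preorder 𝕜]
    (hf : HasStrictlyDecreasingMarginals f) {b : V} {l' : List V} (hl : (a :: l).Nodup)
    (hl' : (b :: l').Nodup) (hletters : (a :: l).toFinset = (b :: l').toFinset)
    (heq : greedyVector f (a :: l) a = greedyVector f (b :: l') a) : a = b := by
  by_contra hab
  have hal : a ∉ l.toFinset := by simpa using (List.nodup_cons.1 hl).1
  have hbl' : b ∉ l'.toFinset := by simpa using (List.nodup_cons.1 hl').1
  have hal' : a ∈ l' := by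
    have ha : a ∈ (b :: l').toFinset := hletters ▸ by simp
    simpa [hab] using ha
  have hletters' : l.toFinset = insert b (l'.toFinset.erase a) := by
    rw [← erase_insert hal, ← List.toFinset_cons, hletters, List.toFinset_cons,
      erase_insert_of_ne (Ne.symm hab)]
  have hlt : marginal f l.toFinset a < greedyVector f l' a :=
    hf.marginal_lt_greedyVector hl'.of_cons hal' hal
      (hletters' ▸ ssubset_insert fun hb ↦ hbl' (mem_of_mem_erase hb))
  rw [greedyVector_cons_self, greedyVector_cons_of_ne hab] at heq
  exact hlt.ne heq

lemma image_greedyVector_length_lt [Fintype V] [Nonempty V]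
    (hf : ∀ a, marginal f (univ.erase a) a = 0) :
    greedyVector f '' {l | l.Nodup ∧ l.length < Fintype.card V} =
      greedyVector f '' {l | l.Nodup} := by
  refine (Set.image_mono fun l hl ↦ hl.1).antisymm ?_
  rintro _ ⟨l, hl : l.Nodup, rfl⟩
  obtain hlt | hge := lt_or_ge l.length (Fintype.card V)
  · exact ⟨l, ⟨hl, hlt⟩, rfl⟩
  cases l with
  | nil => exact absurd hge Fintype.card_pos.not_ge
  | cons a l =>
    obtain ⟨ha, hnd⟩ := List.nodup_cons.1 hl
    have huniv : (a :: l).toFinset = univ :=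
      eq_univ_of_card _ ((List.toFinset_card_of_nodup hl).trans (hl.length_le_card.antisymm hge))
    have htail : l.toFinset = univ.erase a := by
      rw [← huniv, List.toFinset_cons, erase_insert (by simpa using ha)]
    refine ⟨l, ⟨hnd, hl.length_le_card⟩, ?_⟩
    exact (greedyVector_cons_of_marginal_eq_zero ha (by rw [htail, hf])).symm

end Greedy

section OrderedAddCommGroup

variable [DecidableEq V] [AddCommGroup 𝕜] {f : Finset V → 𝕜} {x : V → 𝕜} {l : List V}

lemma forall_mem_eq_greedyVector_iff (h0 : f ∅ = 0) (hl : l.Nodup) :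
    (∀ v ∈ l, x v = greedyVector f l v) ↔ ∀ s, s <:+ l → IsTight f x s.toFinset := by
  induction l with
  | nil => simp [IsTight, h0]
  | cons a l ih =>
    obtain ⟨ha, hl⟩ := List.nodup_cons.1 hl
    have htail : (∀ v ∈ l, x v = greedyVector f (a :: l) v) ↔
        ∀ s, s <:+ l → IsTight f x s.toFinset := by
      rw [← ih hl]
      refine forall₂_congr fun v hv ↦ ?_
      rw [greedyVector_cons_of_ne (ne_of_mem_of_not_mem hv ha)]
    simp only [List.forall_mem_cons, List.suffix_cons_iff, forall_eq_or_imp, htail]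
    refine and_congr_left fun htight ↦ ?_
    have hsum : ∑ v ∈ l.toFinset, x v = f l.toFinset := htight l l.suffix_refl
    rw [greedyVector_cons_self, IsTight, List.toFinset_cons, sum_insert (by simpa using ha), hsum,
      marginal, eq_sub_iff_add_eq]

variable [PartialOrder 𝕜] [IsOrderedAddMonoid 𝕜]

lemma IsTight.union_and_inter {S T : Finset V} (hS : IsTight f x S) (hT : IsTight f x T)
    (hs : IsSubmodular f) (hx : x ∈ polymatroid f) :
    IsTight f x (S ∪ T) ∧ IsTight f x (S ∩ T) := by
  have hsum : ∑ v ∈ S ∪ T, x v + ∑ v ∈ S ∩ T, x v = f S + f T := by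
    rw [sum_union_inter, hS, hT]
  refine (add_eq_add_iff_eq_and_eq (hx.2 _) (hx.2 _)).1 (le_antisymm ?_ ?_)
  · exact add_le_add (hx.2 _) (hx.2 _)
  · exact (hs S T).trans_eq hsum.symm

lemma IsSubmodular.marginal_le_marginal (hs : IsSubmodular f) {S T : Finset V} (hST : S ⊆ T)
    {a : V} (ha : a ∉ T) : marginal f T a ≤ marginal f S a := by
  have h := hs (insert a S) T
  rw [insert_union, union_eq_right.2 hST, insert_inter_of_notMem ha, inter_eq_left.2 hST] at h
  exact sub_le_sub_iff.2 h

lemma marginal_nonneg (hm : Monotone f) (S : Finset V) (a : V) : 0 ≤ marginal f S a :=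
  sub_nonneg.2 (hm (subset_insert a S))

lemma greedyVector_nonneg (hm : Monotone f) (l : List V) (v : V) : 0 ≤ greedyVector f l v := by
  induction l with
  | nil => rfl
  | cons a l ih =>
    obtain rfl | hva := eq_or_ne v a
    · rw [greedyVector_cons_self]
      exact marginal_nonneg hm _ _
    · rwa [greedyVector_cons_of_ne hva]

lemma sum_greedyVector_le (h0 : f ∅ = 0) (hs : IsSubmodular f) (hl : l.Nodup) {S : Finset V}
    (hS : S ⊆ l.toFinset) : ∑ v ∈ S, greedyVector f l v ≤ f S := by
  induction l generalizing S with
  | nil => simp [subset_empty.1 hS, h0]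
  | cons a l ih =>
    obtain ⟨ha, hl⟩ := List.nodup_cons.1 hl
    have htail : ∀ T, a ∉ T → T ⊆ l.toFinset → ∑ v ∈ T, greedyVector f (a :: l) v ≤ f T := by
      intro T haT hT
      rw [sum_congr rfl fun v hv ↦ greedyVector_cons_of_ne (ne_of_mem_of_not_mem hv haT)]
      exact ih hl hT
    rw [List.toFinset_cons, subset_insert_iff] at hS
    by_cases haS : a ∈ S
    · rw [← add_sum_erase S _ haS, greedyVector_cons_self]
      calc marginal f l.toFinset a + ∑ v ∈ S.erase a, greedyVector f (a :: l) v
          ≤ marginal f (S.erase a) a + f (S.erase a) :=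
            add_le_add (hs.marginal_le_marginal hS (by simpa using ha))
              (htail _ (notMem_erase a S) hS)
        _ = f S := by rw [marginal, insert_erase haS, sub_add_cancel]
    · rw [erase_eq_of_notMem haS] at hS
      exact htail S haS hS

lemma greedyVector_mem_polymatroid (h0 : f ∅ = 0) (hm : Monotone f) (hs : IsSubmodular f)
    (hl : l.Nodup) : greedyVector f l ∈ polymatroid f := by
  refine ⟨greedyVector_nonneg hm l, fun S ↦ ?_⟩
  calc ∑ v ∈ S, greedyVector f l v
      = ∑ v ∈ S ∩ l.toFinset, greedyVector f l v := by
        refine (sum_subset inter_subset_left fun v hvS hv ↦ greedyVector_of_notMem ?_).symm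
        simpa [hvS] using hv
    _ ≤ f (S ∩ l.toFinset) := sum_greedyVector_le h0 hs hl inter_subset_right
    _ ≤ f S := hm inter_subset_left

lemma mem_iff_greedyVector_ne_zero [Fintype V] (hm : Monotone f)
    (hf : HasStrictlyDecreasingMarginals f) (hl : l.Nodup) (hlt : l.length < Fintype.card V)
    {v : V} : v ∈ l ↔ greedyVector f l v ≠ 0 := by
  refine ⟨fun hv ↦ ne_of_gt ?_, not_imp_comm.1 greedyVector_of_notMem⟩
  obtain ⟨b, -, hb⟩ : ∃ b ∈ univ, b ∉ l.toFinset :=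
    exists_mem_notMem_of_card_lt_card (by rwa [List.toFinset_card_of_nodup hl])
  have hbv : b ≠ v := by
    rintro rfl
    exact hb (by simpa using hv)
  have hssub : l.toFinset.erase v ⊂ (insert b l.toFinset).erase v := by
    rw [erase_insert_of_ne hbv]
    exact ssubset_insert (by simp_all)
  exact (marginal_nonneg hm _ v).trans_lt
    (hf.marginal_lt_greedyVector hl hv (notMem_erase v _) hssub)

lemma toFinset_eq_of_greedyVector_eq [Fintype V] (hm : Monotone f)
    (hf : HasStrictlyDecreasingMarginals f) {l' : List V} (hl : l.Nodup)
    (hlt : l.length < Fintype.card V) (hl' : l'.Nodup) (hlt' : l'.length < Fintype.card V)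
    (heq : greedyVector f l = greedyVector f l') : l.toFinset = l'.toFinset := by
  ext v
  rw [List.mem_toFinset, List.mem_toFinset, mem_iff_greedyVector_ne_zero hm hf hl hlt,
    mem_iff_greedyVector_ne_zero hm hf hl' hlt', heq]

theorem injOn_greedyVector [Fintype V] (hm : Monotone f) (hf : HasStrictlyDecreasingMarginals f) :
    Set.InjOn (greedyVector f) {l | l.Nodup ∧ l.length < Fintype.card V} := by
  rintro l ⟨hl, hlt⟩ l' ⟨hl', hlt'⟩ heq
  induction l generalizing l' with
  | nil =>
    have hletters := toFinset_eq_of_greedyVector_eq hm hf hl hlt hl' hlt' heq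
    exact ((List.toFinset_eq_empty_iff l').1 hletters.symm).symm
  | cons a l ih =>
    have hletters := toFinset_eq_of_greedyVector_eq hm hf hl hlt hl' hlt' heq
    cases l' with
    | nil => simp at hletters
    | cons b l' =>
      obtain rfl := hf.head_eq_of_greedyVector_eq hl hl' hletters (congrFun heq a)
      have htail : greedyVector f l = greedyVector f l' := by
        funext v
        obtain rfl | hva := eq_or_ne v a
        · rw [greedyVector_of_notMem (List.nodup_cons.1 hl).1,
            greedyVector_of_notMem (List.nodup_cons.1 hl').1]
        · simpa only [greedyVector_cons_of_ne hva] using congrFun heq v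
      rw [ih hl.of_cons ((Nat.lt_succ_self _).trans hlt) hl'.of_cons
        ((Nat.lt_succ_self _).trans hlt') htail]

end OrderedAddCommGroup

section ExtremePoints

variable [Field 𝕜] [LinearOrder 𝕜] [IsStrictOrderedRing 𝕜] {f : Finset V → 𝕜} {x : V → 𝕜}

lemma IsTight.of_mem_openSegment {y z : V → 𝕜} {S : Finset V} (hS : IsTight f x S)
    (hy : y ∈ polymatroid f) (hz : z ∈ polymatroid f) (hx : x ∈ openSegment 𝕜 y z) :
    IsTight f y S := by
  let sumOver : (V → 𝕜) →ₗ[𝕜] 𝕜 := ∑ v ∈ S, LinearMap.proj v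
  have hsum : ∀ w, sumOver w = ∑ v ∈ S, w v := fun w ↦ by simp [sumOver]
  have hmem : sumOver x ∈ openSegment 𝕜 (sumOver y) (sumOver z) :=
    image_openSegment 𝕜 sumOver.toAffineMap y z ▸ Set.mem_image_of_mem _ hx
  rw [hsum, hsum, hsum, hS] at hmem
  exact left_eq_of_mem_openSegment_of_le hmem (hy.2 S) (hz.2 S)

section Finite

variable [Finite V]

lemma eq_zero_of_mem_extremePoints_polymatroid {d : V → 𝕜}
    (hx : x ∈ Set.extremePoints 𝕜 (polymatroid f)) (hd0 : ∀ v, x v = 0 → d v = 0)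
    (hd : ∀ S, IsTight f x S → ∑ v ∈ S, d v = 0) : d = 0 := by
  have hxP := hx.1
  obtain ⟨ε, hε, hle⟩ := exists_pos_forall_mul_abs_le
    (c := Sum.elim x fun S ↦ f S - ∑ v ∈ S, x v) (d := Sum.elim d fun S ↦ ∑ v ∈ S, d v)
    (Sum.forall.2 ⟨hxP.1, fun S ↦ sub_nonneg.2 (hxP.2 S)⟩)
    (Sum.forall.2 ⟨hd0, fun S h ↦ hd S (sub_eq_zero.1 h).symm⟩)
  have hmem : ∀ t : 𝕜, |t| = ε → x + t • d ∈ polymatroid f := by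
    rintro t rfl
    refine ⟨fun v ↦ ?_, fun S ↦ ?_⟩
    · have hv : |t * d v| ≤ x v := by simpa [abs_mul] using hle (.inl v)
      simpa [neg_le_iff_add_nonneg'] using neg_le_of_abs_le hv
    · have hS : |t * ∑ v ∈ S, d v| ≤ f S - ∑ v ∈ S, x v := by
        simpa [abs_mul] using hle (.inr S)
      simpa [sum_add_distrib, ← mul_sum, le_sub_iff_add_le'] using le_of_abs_le hS
  have hseg : x ∈ openSegment 𝕜 (x + ε • d) (x + (-ε) • d) :=
    ⟨1 / 2, 1 / 2, by positivity, by positivity, by ring, by module⟩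
  have hεd : x + ε • d = x :=
    hx.2 (hmem ε (abs_of_pos hε)) (hmem (-ε) (by rw [abs_neg, abs_of_pos hε])) hseg
  exact (smul_eq_zero.1 (add_eq_left.1 hεd)).resolve_left hε.ne'

lemma exists_isTight_mem (hx : x ∈ Set.extremePoints 𝕜 (polymatroid f)) {v : V} (hv : x v ≠ 0) :
    ∃ S, IsTight f x S ∧ v ∈ S := by
  classical
  by_contra! hnot
  have hd : (Pi.single v 1 : V → 𝕜) = 0 := by
    refine eq_zero_of_mem_extremePoints_polymatroid hx (fun w hw ↦ ?_) fun S hS ↦ ?_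
    · exact Pi.single_eq_of_ne (by rintro rfl; exact hv hw) 1
    · rw [sum_pi_single', if_neg (hnot S hS)]
  exact one_ne_zero (Pi.single_eq_zero_iff.1 hd)

lemma exists_isTight_separating (hx : x ∈ Set.extremePoints 𝕜 (polymatroid f)) {u v : V}
    (hu : x u ≠ 0) (hv : x v ≠ 0) (huv : u ≠ v) : ∃ S, IsTight f x S ∧ ¬(u ∈ S ↔ v ∈ S) := by
  classical
  by_contra! hnot
  have hd : (Pi.single u 1 - Pi.single v 1 : V → 𝕜) = 0 := by
    refine eq_zero_of_mem_extremePoints_polymatroid hx (fun w hw ↦ ?_) fun S hS ↦ ?_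
    · have hwu : w ≠ u := by rintro rfl; exact hu hw
      have hwv : w ≠ v := by rintro rfl; exact hv hw
      simp [hwu, hwv]
    · simp [sum_pi_single', hnot S hS]
  simpa [huv] using congrFun hd u

variable [DecidableEq V]

lemma exists_isTight_insert (hm : Monotone f) (hs : IsSubmodular f)
    (hx : x ∈ Set.extremePoints 𝕜 (polymatroid f)) {A : Finset V} (hA : IsTight f x A) {w : V}
    (hwA : w ∉ A) (hw : x w ≠ 0) : ∃ v ∉ A, IsTight f x (insert v A) := by
  obtain ⟨S, hS, hwS⟩ := exists_isTight_mem hx hw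
  -- A minimal tight set that properly extends `A` within the support does so by a single vertex.
  obtain ⟨B, ⟨hAB, hB, v, hvB, hvA, hv⟩, hmin⟩ := exists_minimal_of_wellFoundedLT
    (fun B ↦ A ⊆ B ∧ IsTight f x B ∧ ∃ v ∈ B, v ∉ A ∧ x v ≠ 0)
    ⟨A ∪ S, subset_union_left, (hA.union_and_inter hS hs hx.1).1, w, by simp [hwS], hwA, hw⟩
  have hcover : ∀ T, IsTight f x T → ∀ u ∈ B, u ∉ A → x u ≠ 0 → u ∈ T → B ⊆ A ∪ T ∩ B := by
    intro T hT u huB huA hu huT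
    have hTB : IsTight f x (T ∩ B) := (hT.union_and_inter hB hs hx.1).2
    exact hmin
      ⟨subset_union_left, (hA.union_and_inter hTB hs hx.1).1, u, by simp [huT, huB], huA, hu⟩
      (union_subset hAB inter_subset_right)
  have hunique : ∀ u ∈ B, u ∉ A → x u ≠ 0 → u = v := by
    intro u huB huA hu
    by_contra huv
    obtain ⟨T, hT, hsep⟩ := exists_isTight_separating hx hu hv huv
    refine hsep ⟨fun huT ↦ ?_, fun hvT ↦ ?_⟩
    · simpa [hvA, hvB] using hcover T hT u huB huA hu huT hvB
    · simpa [huA, huB] using hcover T hT v hvB hvA hv hvT huB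
  refine ⟨v, hvA, hB.of_subset hm hx.1 (insert_subset hvB hAB) fun u huB hu ↦ ?_⟩
  rw [mem_insert, not_or] at hu
  exact not_not.1 fun hxu ↦ hu.1 (hunique u huB hu.2 hxu)

end Finite

variable [DecidableEq V] {l : List V}

lemma greedyVector_mem_extremePoints (h0 : f ∅ = 0) (hm : Monotone f) (hs : IsSubmodular f)
    (hl : l.Nodup) : greedyVector f l ∈ Set.extremePoints 𝕜 (polymatroid f) := by
  refine mem_extremePoints_iff_left.2
    ⟨greedyVector_mem_polymatroid h0 hm hs hl, fun y hy z hz hyz ↦ funext fun v ↦ ?_⟩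
  by_cases hv : v ∈ l
  · have htight := (forall_mem_eq_greedyVector_iff h0 hl).1 fun v _ ↦ rfl
    exact (forall_mem_eq_greedyVector_iff h0 hl).2
      (fun s hsl ↦ (htight s hsl).of_mem_openSegment hy hz hyz) v hv
  · have hmem := Pi.openSegment_subset y z hyz v (Set.mem_univ v)
    rw [greedyVector_of_notMem hv] at hmem ⊢
    exact left_eq_of_mem_openSegment_of_ge hmem (hy.1 v) (hz.1 v)

lemma exists_eq_greedyVector_of_mem_extremePoints [Finite V] (h0 : f ∅ = 0) (hm : Monotone f)
    (hs : IsSubmodular f) (hx : x ∈ Set.extremePoints 𝕜 (polymatroid f)) :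
    ∃ l : List V, l.Nodup ∧ greedyVector f l = x := by
  have := Fintype.ofFinite V
  have hfin : {l : List V | l.Nodup ∧ ∀ s, s <:+ l → IsTight f x s.toFinset}.Finite :=
    (List.finite_length_le V (Fintype.card V)).subset fun _ h ↦ h.1.length_le_card
  obtain ⟨l, ⟨hl, htight⟩, hmax⟩ := hfin.exists_maximalFor List.length _
    ⟨[], List.nodup_nil, by simp [IsTight, h0]⟩
  have hsupport : ∀ w ∉ l, x w = 0 := by
    by_contra! ⟨w, hwl, hw⟩
    obtain ⟨v, hvl, hv⟩ := exists_isTight_insert hm hs hx (htight l l.suffix_refl)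
      (by simpa using hwl) hw
    rw [← List.toFinset_cons] at hv
    have hlonger := hmax (j := v :: l)
      ⟨List.nodup_cons.2 ⟨by simpa using hvl, hl⟩, by
        simpa [List.suffix_cons_iff] using ⟨by simpa using hv, htight⟩⟩ (by simp)
    simp at hlonger
  refine ⟨l, hl, funext fun v ↦ ?_⟩
  by_cases hv : v ∈ l
  · exact ((forall_mem_eq_greedyVector_iff h0 hl).2 htight v hv).symm
  · rw [greedyVector_of_notMem hv, hsupport v hv]

theorem extremePoints_polymatroid [Finite V] (h0 : f ∅ = 0) (hm : Monotone f)
    (hs : IsSubmodular f) :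
    Set.extremePoints 𝕜 (polymatroid f) = greedyVector f '' {l | l.Nodup} := by
  ext x
  constructor
  · exact exists_eq_greedyVector_of_mem_extremePoints h0 hm hs
  · rintro ⟨l, hl, rfl⟩
    exact greedyVector_mem_extremePoints h0 hm hs hl

end ExtremePoints

end Polymatroid

section InjectiveWords

lemma sum_range_descFactorial (n : ℕ) :
    ∑ k ∈ range n, n.descFactorial k = ∑ i ∈ Icc 1 n, n.factorial / i.factorial := by
  refine sum_nbij' (n - ·) (n - ·) ?_ ?_ ?_ ?_ fun k hk ↦
    Nat.descFactorial_eq_div (mem_range.1 hk).le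
  all_goals intro k hk; simp only [mem_range, mem_Icc] at hk ⊢; lia

variable (V : Type*) [Fintype V] [DecidableEq V]

/-- The words of length less than `m` without repeated letters, as a finset. -/
noncomputable def injectiveWords (m : ℕ) : Finset (List V) :=
  (univ : Finset (Σ k : Fin m, Fin k ↪ V)).image fun w ↦ List.ofFn w.2

variable {V} in
lemma mem_injectiveWords {m : ℕ} {l : List V} :
    l ∈ injectiveWords V m ↔ l.Nodup ∧ l.length < m := by
  simp only [injectiveWords, mem_image, mem_univ, true_and]
  constructor
  · rintro ⟨⟨k, w⟩, rfl⟩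
    exact ⟨List.nodup_ofFn.2 w.injective, by simp⟩
  · rintro ⟨hl, hm⟩
    exact ⟨⟨⟨l.length, hm⟩, l.get, List.nodup_iff_injective_get.1 hl⟩, List.ofFn_get l⟩

lemma card_injectiveWords (m : ℕ) :
    #(injectiveWords V m) = ∑ k ∈ range m, (Fintype.card V).descFactorial k := by
  have hinj : Function.Injective fun w : Σ k : Fin m, Fin k ↪ V ↦ List.ofFn w.2 := by
    rintro ⟨⟨k, hk⟩, w⟩ ⟨⟨k', hk'⟩, w'⟩ h
    obtain rfl : k = k' := by simpa using congrArg List.length h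
    obtain rfl : w = w' := DFunLike.coe_injective (List.ofFn_injective h)
    rfl
  rw [injectiveWords, card_image_of_injective _ hinj, card_univ, Fintype.card_sigma]
  simp only [Fintype.card_embedding_eq, Fintype.card_fin]
  exact Fin.sum_univ_eq_sum_range (Fintype.card V).descFactorial m

lemma coe_injectiveWords (m : ℕ) :
    (injectiveWords V m : Set (List V)) = {l | l.Nodup ∧ l.length < m} :=
  Set.ext fun _ ↦ mem_injectiveWords

end InjectiveWords

section Multigraph

lemma range_eq_setOf_not_isDiag_iff {V E : Type*} {ends : E → Sym2 V}
    (hloopless : ∀ e, ¬ (ends e).IsDiag) :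
    Set.range ends = {p | ¬ p.IsDiag} ↔ ∀ u v, u ≠ v → s(u, v) ∈ Set.range ends := by
  rw [Set.Subset.antisymm_iff, and_iff_right (Set.range_subset_iff.2 hloopless)]
  exact Sym2.forall

variable {V E : Type*} [Fintype E] [DecidableEq V] (ends : E → Sym2 V)

/-- The degree function `S ↦ κ_S` with real values; by definition, its polymatroid is
`scorePolytope ends`. -/
def realKappa (S : Finset V) : ℝ := multigraphKappa ends S

/-- The edges that are counted in `κ` of `S ∪ {a}` but not in `κ` of `S`. -/
def newEdges (S : Finset V) (a : V) : Finset E :=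
  {e | a ∈ ends e ∧ ∀ v ∈ S, v ∉ ends e}

lemma multigraphKappa_mono : Monotone (multigraphKappa ends) := fun _ _ hST ↦
  card_le_card <| monotone_filter_right _ fun _ _ ⟨v, hv, hve⟩ ↦ ⟨v, hST hv, hve⟩

lemma multigraphKappa_union_add_inter_le (S T : Finset V) :
    multigraphKappa ends (S ∪ T) + multigraphKappa ends (S ∩ T) ≤
      multigraphKappa ends S + multigraphKappa ends T := by
  classical
  unfold multigraphKappa
  rw [← card_union_add_card_inter ({e | ∃ v ∈ S, v ∈ ends e} : Finset E)]
  gcongr <;> intro e <;> simp only [mem_filter, mem_union, mem_inter] <;> grind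

lemma multigraphKappa_insert (S : Finset V) (a : V) :
    multigraphKappa ends (insert a S) = multigraphKappa ends S + #(newEdges ends S a) := by
  classical
  unfold multigraphKappa newEdges
  rw [← card_union_of_disjoint (disjoint_filter.2 fun e _ ⟨v, hv, hve⟩ h ↦ h.2 v hv hve),
    ← filter_or]
  congr 1
  ext e
  simp only [mem_filter, mem_insert]
  grind

lemma realKappa_empty : realKappa ends ∅ = 0 := by
  simp [realKappa, multigraphKappa]

lemma realKappa_mono : Monotone (realKappa ends) :=
  Nat.mono_cast.comp (multigraphKappa_mono ends)

lemma isSubmodular_realKappa : IsSubmodular (realKappa ends) := fun S T ↦ by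
  unfold realKappa
  exact_mod_cast multigraphKappa_union_add_inter_le ends S T

lemma marginal_realKappa (S : Finset V) (a : V) :
    marginal (realKappa ends) S a = #(newEdges ends S a) := by
  rw [marginal, realKappa, realKappa, multigraphKappa_insert, Nat.cast_add, add_sub_cancel_left]

variable {ends}

lemma hasStrictlyDecreasingMarginals_realKappa (hadj : ∀ u v, u ≠ v → s(u, v) ∈ Set.range ends) :
    HasStrictlyDecreasingMarginals (realKappa ends) := by
  intro S T hST a haT
  obtain ⟨b, hbT, hbS⟩ := exists_of_ssubset hST
  obtain ⟨e, he⟩ := hadj a b (ne_of_mem_of_not_mem hbT haT).symm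
  rw [marginal_realKappa, marginal_realKappa, Nat.cast_lt]
  refine card_lt_card (ssubset_iff_of_subset ?_ |>.2 ⟨e, ?_, ?_⟩)
  · exact monotone_filter_right _ fun _ _ h ↦ ⟨h.1, fun v hv ↦ h.2 v (hST.1 hv)⟩
  · have haS : a ∉ S := fun haS ↦ haT (hST.1 haS)
    simp only [newEdges, mem_filter, mem_univ, he, Sym2.mem_iff]
    grind
  · simp only [newEdges, mem_filter, he]
    exact fun h ↦ h.2.2 b hbT (Sym2.mem_mk_right a b)

lemma marginal_realKappa_eq_zero {S : Finset V} {a : V}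
    (hadj : ∀ w, s(a, w) ∈ Set.range ends → w ∈ S) : marginal (realKappa ends) S a = 0 := by
  rw [marginal_realKappa, Nat.cast_eq_zero, card_eq_zero, newEdges, filter_eq_empty_iff]
  rintro e - ⟨hae, hS⟩
  obtain ⟨w, hw⟩ := Sym2.mem_iff_exists.1 hae
  exact hS w (hadj w ⟨e, hw⟩) (hw ▸ Sym2.mem_mk_right a w)

variable [Fintype V]

theorem extremePoints_scorePolytope [Nonempty V] (hloopless : ∀ e, ¬ (ends e).IsDiag) :
    Set.extremePoints ℝ (scorePolytope ends) =
      greedyVector (realKappa ends) '' {l | l.Nodup ∧ l.length < Fintype.card V} := by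
  rw [image_greedyVector_length_lt]
  · exact extremePoints_polymatroid (realKappa_empty ends) (realKappa_mono ends)
      (isSubmodular_realKappa ends)
  · refine fun a ↦ marginal_realKappa_eq_zero ?_
    rintro w ⟨e, he⟩
    have haw : a ≠ w := by simpa [he] using hloopless e
    simpa using haw.symm

lemma mem_range_of_injOn_greedyVector_realKappa (hloopless : ∀ e, ¬ (ends e).IsDiag)
    (hinj : Set.InjOn (greedyVector (realKappa ends))
      {l | l.Nodup ∧ l.length < Fintype.card V}) {u v : V} (huv : u ≠ v) :
    s(u, v) ∈ Set.range ends := by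
  by_contra hnot
  let l := ({u, v}ᶜ : Finset V).toList
  have hul : u ∉ l := by simp [l]
  have hvl : v ∉ u :: l := by simp [l, huv.symm]
  have hnodup : (u :: l).Nodup := List.nodup_cons.2 ⟨hul, nodup_toList _⟩
  have hlength : (u :: l).length < Fintype.card V :=
    (List.nodup_cons.2 ⟨hvl, hnodup⟩).length_le_card
  have hmarginal : marginal (realKappa ends) l.toFinset u = 0 := by
    refine marginal_realKappa_eq_zero fun w hw ↦ ?_
    have hwu : w ≠ u := by
      rintro rfl
      obtain ⟨e, he⟩ := hw
      exact hloopless e (by simp [he])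
    have hwv : w ≠ v := by
      rintro rfl
      exact hnot hw
    simp [l, hwu, hwv]
  exact List.cons_ne_self u l <| hinj ⟨hnodup, hlength⟩
    ⟨hnodup.of_cons, (Nat.lt_succ_self _).trans hlength⟩
    (greedyVector_cons_of_marginal_eq_zero hul hmarginal)

theorem injOn_greedyVector_realKappa_iff (hloopless : ∀ e, ¬ (ends e).IsDiag) :
    Set.InjOn (greedyVector (realKappa ends)) {l | l.Nodup ∧ l.length < Fintype.card V} ↔
      Set.range ends = {p | ¬ p.IsDiag} := by
  rw [range_eq_setOf_not_isDiag_iff hloopless]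
  constructor
  · exact fun hinj _ _ ↦ mem_range_of_injOn_greedyVector_realKappa hloopless hinj
  · exact fun hadj ↦ injOn_greedyVector (realKappa_mono ends)
      (hasStrictlyDecreasingMarginals_realKappa hadj)

end Multigraph

theorem card_extremePoints_scorePolytope_simple_general
    {V E : Type*} [Fintype V] [Fintype E] [DecidableEq V]
    (ends : E → Sym2 V)
    (hloopless : ∀ e : E, ¬ (ends e).IsDiag)
    (hn : 1 ≤ Fintype.card V) :
    (Set.extremePoints ℝ (scorePolytope ends)).Finite ∧
      (Set.extremePoints ℝ (scorePolytope ends)).ncard ≤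
        ∑ i ∈ Finset.Icc 1 (Fintype.card V),
          (Fintype.card V).factorial / i.factorial ∧
      ((Set.extremePoints ℝ (scorePolytope ends)).ncard =
          ∑ i ∈ Finset.Icc 1 (Fintype.card V),
            (Fintype.card V).factorial / i.factorial ↔
        Set.range ends = {p : Sym2 V | ¬ p.IsDiag}) := by
  have : Nonempty V := Fintype.card_pos_iff.1 hn
  let words := injectiveWords V (Fintype.card V)
  have hwords : #words =
      ∑ i ∈ Icc 1 (Fintype.card V), (Fintype.card V).factorial / i.factorial := by
    rw [card_injectiveWords, sum_range_descFactorial]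
  have hext :
      Set.extremePoints ℝ (scorePolytope ends) = greedyVector (realKappa ends) '' words := by
    rw [extremePoints_scorePolytope hloopless, coe_injectiveWords]
  have hfin : (words : Set (List V)).Finite := words.finite_toSet
  rw [hext, ← hwords, ← Set.ncard_coe_finset]
  refine ⟨hfin.image _, Set.ncard_image_le hfin, ?_⟩
  rw [Set.ncard_image_iff hfin, coe_injectiveWords, injOn_greedyVector_realKappa_iff hloopless]

/-- For a simple multigraph (injective `ends`, no loops) with `n ≥ 1` vertices,
the score vector polytope has finitely many extreme points, at most
`∑_{i=1}^{n} n!/i! = ⌊(e−1)·n!⌋`, with equality if and only if the graph is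
complete. -/
theorem card_extremePoints_scorePolytope_simple
    {V E : Type*} [Fintype V] [Fintype E] [DecidableEq V]
    (ends : E → Sym2 V)
    (hinj : Function.Injective ends)
    (hloopless : ∀ e : E, ¬ (ends e).IsDiag)
    (hn : 1 ≤ Fintype.card V) :
    (Set.extremePoints ℝ (scorePolytope ends)).Finite ∧
      (Set.extremePoints ℝ (scorePolytope ends)).ncard ≤
        ∑ i ∈ Finset.Icc 1 (Fintype.card V),
          (Fintype.card V).factorial / i.factorial ∧
      ((Set.extremePoints ℝ (scorePolytope ends)).ncard =
          ∑ i ∈ Finset.Icc 1 (Fintype.card V),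
            (Fintype.card V).factorial / i.factorial ↔
        Set.range ends = {p : Sym2 V | ¬ p.IsDiag}) := by
  exact card_extremePoints_scorePolytope_simple_general ends hloopless hn
end

section
/- Let G = (V, E, ends) be a connected multigraph with E nonempty (connected means: the simple graph on V in which u is adjacent to v iff u ≠ v and some edge of G has endpoints {u, v} is connected). Then the number of vectors a : V → ℕ with ∑_{v∈V} a_v = |E| − 1 and ∑_{v∈S} a_v < κ_S for every nonempty subset S ⊆ V equals the number of spanning trees of G, i.e., the number of subsets T ⊆ E such that no edge of T is a loop, |T| = |V| − 1, and the simple graph on V in which u is adjacent to v iff u ≠ v and some edge of T has endpoints {u, v} is connected. -/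
open Finset

/-- The simple graph underlying a set of edges of a multigraph: `u` is adjacent
to `v` iff `u ≠ v` and some chosen edge has endpoints `{u, v}`. -/
def underlyingGraph {V E : Type*} (ends : E → Sym2 V) (T : Set E) : SimpleGraph V :=
  SimpleGraph.fromRel fun u v => ∃ e ∈ T, ends e = s(u, v)

/-!
Deletion–contraction: both sides satisfy the same recursion in the edge set. Adding a loop at `u`
shifts the vectors by the unit vector at `u` and creates no spanning tree. For an edge `e = uv` with
`u ≠ v`, the vectors of `G` that stay admissible for `G \ e` after lowering the coordinate at `u`
correspond to the vectors of `G \ e`. The others are those for which some `S` with `v ∈ S`, `u ∉ S`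
is tight, and merging the coordinates at `u` and `v` maps them bijectively onto the vectors of
`G / e`: tightness says that the coordinate at `v` is as large as possible, hence determined by the
merged vector, and submodularity of `κ` shows that every vector of `G / e` has such a lift.
The recursion starts at the edgeless graph, where the total `|E| − 1` is `-1`; this is why it runs
over integer vectors.
-/

namespace Multigraph

variable {V E : Type*}

section Vectors

variable [DecidableEq V] {R : Type*} [AddCommGroup R]

lemma sum_sub_single (b : V → R) (u : V) (k : R) (S : Finset V) :
    ∑ x ∈ S, (b - Pi.single u k : V → R) x = ∑ x ∈ S, b x - if u ∈ S then k else 0 := by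
  simp [sum_sub_distrib, sum_pi_single']

/-- The vector obtained from `b` by moving `l` units of weight from the vertex `u` to `v`. -/
def transfer (u v : V) (l : R) (b : V → R) : V → R :=
  b + Pi.single v l - Pi.single u l

lemma sum_transfer (u v : V) (l : R) (b : V → R) (S : Finset V) :
    ∑ x ∈ S, transfer u v l b x =
      ∑ x ∈ S, b x + (if v ∈ S then l else 0) - if u ∈ S then l else 0 := by
  simp [transfer, sum_sub_distrib, sum_add_distrib, sum_pi_single']

lemma exists_transfer_le_of_submodular [Finite V] [LinearOrder R] [IsOrderedAddMonoid R]
    {f : Finset V → R} (hf : ∀ A B, f (A ∪ B) + f (A ∩ B) ≤ f A + f B) {u v : V} (huv : u ≠ v)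
    {b : V → R} (hb : ∀ S, (u ∈ S ↔ v ∈ S) → ∑ x ∈ S, b x ≤ f S) :
    ∃ l, (∀ S, ∑ x ∈ S, transfer u v l b x ≤ f S) ∧
      ∃ S, v ∈ S ∧ u ∉ S ∧ f S ≤ ∑ x ∈ S, transfer u v l b x := by
  cases nonempty_fintype V
  obtain ⟨M, hM, hmin⟩ := exists_min_image {S : Finset V | v ∈ S ∧ u ∉ S}
    (fun S => f S - ∑ x ∈ S, b x) ⟨{v}, by simpa using huv⟩
  simp only [mem_filter, mem_univ, true_and] at hM hmin
  obtain ⟨hvM, huM⟩ := hM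
  refine ⟨f M - ∑ x ∈ M, b x, fun S => ?_, M, hvM, huM, by simp [sum_transfer, hvM, huM]⟩
  by_cases huS : u ∈ S <;> by_cases hvS : v ∈ S
  · simpa [sum_transfer, huS, hvS] using hb S (by tauto)
  · -- Uncrossing: `S ∪ M` contains both `u` and `v`, and `S ∩ M` neither.
    have hunion := hb (S ∪ M) (by simp [huS, hvM])
    have hinter := hb (S ∩ M) (by simp [huM, hvS])
    have hsum := sum_union_inter (s₁ := S) (s₂ := M) (f := b)
    have hsub := hf S M
    simp only [sum_transfer, huS, hvS, if_true, if_false]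
    grind
  · have hS := hmin S ⟨hvS, huS⟩
    simp only [sum_transfer, huS, hvS, if_true, if_false]
    grind
  · simpa [sum_transfer, huS, hvS] using hb S (by tauto)

end Vectors

section Merge

variable [DecidableEq V] {u v : V}

/-- The map on vertices that contracts an edge with endpoints `u ≠ v`: it sends `v` to `u`. -/
def merge (huv : u ≠ v) (x : V) : {x // x ≠ v} :=
  if h : x = v then ⟨u, huv⟩ else ⟨x, h⟩

lemma merge_of_ne (huv : u ≠ v) {x : V} (hx : x ≠ v) : merge huv x = ⟨x, hx⟩ :=
  dif_neg hx

lemma merge_left (huv : u ≠ v) : merge huv u = ⟨u, huv⟩ :=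
  merge_of_ne huv huv

lemma merge_right (huv : u ≠ v) : merge huv v = ⟨u, huv⟩ :=
  dif_pos rfl

lemma merge_coe (huv : u ≠ v) (w : {x // x ≠ v}) : merge huv w = w :=
  merge_of_ne huv w.2

lemma filter_merge_mem_subtype [Fintype V] (huv : u ≠ v) {S : Finset V} (hS : u ∈ S ↔ v ∈ S) :
    ({x | merge huv x ∈ S.subtype (· ≠ v)} : Finset V) = S := by
  ext x
  by_cases hx : x = v
  · simp [hx, merge_right, hS]
  · simp [merge_of_ne huv hx]

/-- The vector on the contracted vertex set obtained from `b` by adding the coordinates at `u` and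
`v` and subtracting `1`, which accounts for the contracted edge. -/
def contractVector (huv : u ≠ v) (b : V → ℤ) : {x // x ≠ v} → ℤ :=
  fun w => b w + Pi.single (M := fun _ => ℤ) ⟨u, huv⟩ (b v - 1) w

lemma sum_contractVector [Fintype V] (huv : u ≠ v) (b : V → ℤ) (T : Finset {x // x ≠ v}) :
    ∑ w ∈ T, contractVector huv b w =
      ∑ x with merge huv x ∈ T, b x - if ⟨u, huv⟩ ∈ T then 1 else 0 := by
  have hsum : ∑ x with merge huv x ∈ T, b x =
      (if ⟨u, huv⟩ ∈ T then b v else 0) + ∑ w ∈ T, b w := by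
    rw [sum_filter, Fintype.sum_eq_add_sum_subtype_ne _ v]
    simp [merge_right, merge_coe]
  rw [hsum]
  simp only [contractVector, sum_add_distrib, sum_pi_single']
  split_ifs <;> ring

lemma contractVector_surjective (huv : u ≠ v) : Function.Surjective (contractVector huv) := by
  refine fun c => ⟨fun x => if h : x = v then 1 else c ⟨x, h⟩, ?_⟩
  ext ⟨x, hx⟩
  simp [contractVector, hx]

lemma contractVector_eq_iff (huv : u ≠ v) (a b : V → ℤ) :
    contractVector huv a = contractVector huv b ↔ a = transfer u v (a v - b v) b := by
  simp only [funext_iff, Subtype.forall, contractVector, transfer, Pi.add_apply, Pi.sub_apply,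
    Pi.single_apply, Subtype.mk.injEq]
  grind

lemma contractVector_transfer (huv : u ≠ v) (l : ℤ) (b : V → ℤ) :
    contractVector huv (transfer u v l b) = contractVector huv b := by
  rw [contractVector_eq_iff]
  simp [transfer, huv.symm]

end Merge

section Degree

variable [DecidableEq V] (ends : E → Sym2 V)

/-- The degree `κ_S` of `S` in the multigraph whose only edges are those in `F`. -/
def kappa (F : Finset E) (S : Finset V) : ℕ :=
  #{e ∈ F | ∃ v ∈ S, v ∈ ends e}

lemma kappa_univ_left [Fintype E] (S : Finset V) : kappa ends univ S = multigraphKappa ends S :=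
  rfl

lemma kappa_insert [DecidableEq E] {F : Finset E} {e : E} (he : e ∉ F) {u v : V}
    (hends : ends e = s(u, v)) (S : Finset V) :
    kappa ends (insert e F) S = kappa ends F S + if u ∈ S ∨ v ∈ S then 1 else 0 := by
  have hmeets : (∃ x ∈ S, x ∈ ends e) ↔ u ∈ S ∨ v ∈ S := by simp [hends, and_or_left, exists_or]
  simp only [kappa, filter_insert, hmeets]
  split_ifs <;> simp [he]

lemma kappa_union_add_kappa_inter_le (F : Finset E) (A B : Finset V) :
    kappa ends F (A ∪ B) + kappa ends F (A ∩ B) ≤ kappa ends F A + kappa ends F B := by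
  classical
  have hunion : {e ∈ F | ∃ v ∈ A ∪ B, v ∈ ends e} =
      {e ∈ F | ∃ v ∈ A, v ∈ ends e} ∪ {e ∈ F | ∃ v ∈ B, v ∈ ends e} := by
    grind
  have hinter : {e ∈ F | ∃ v ∈ A ∩ B, v ∈ ends e} ⊆
      {e ∈ F | ∃ v ∈ A, v ∈ ends e} ∩ {e ∈ F | ∃ v ∈ B, v ∈ ends e} := by
    grind
  simp only [kappa, hunion]
  grw [hinter, card_union_add_card_inter]

lemma kappa_map [Fintype V] {W : Type*} [DecidableEq W] (φ : V → W) (F : Finset E)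
    (T : Finset W) :
    kappa (Sym2.map φ ∘ ends) F T = kappa ends F {x | φ x ∈ T} := by
  simp [kappa, Sym2.mem_map, and_comm]

end Degree

section TopExponents

variable [Fintype V] [DecidableEq V] (ends : E → Sym2 V)

/-- The exponent vectors counted by the top graded component of the central bizonotopal algebra of
the multigraph with edge set `F`. Integer vectors are allowed; for `F ≠ ∅` the conditions force the
coordinates to be nonnegative. -/
def topExponents (F : Finset E) : Set (V → ℤ) :=
  {a | ∑ v, a v = #F - 1 ∧ ∀ S : Finset V, S.Nonempty → ∑ v ∈ S, a v < kappa ends F S}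

/-- Some set that separates `v` from `u` attains the bound `κ` on its weight. -/
def HasTightSet (F : Finset E) (u v : V) (b : V → ℤ) : Prop :=
  ∃ S : Finset V, v ∈ S ∧ u ∉ S ∧ kappa ends F S ≤ ∑ x ∈ S, b x

variable {ends}

lemma nonneg_of_mem_topExponents {F : Finset E} (hF : F.Nonempty) {a : V → ℤ}
    (ha : a ∈ topExponents ends F) (v : V) : 0 ≤ a v := by
  have hsplit := add_sum_erase univ a (mem_univ v)
  rw [ha.1] at hsplit
  rcases (univ.erase v).eq_empty_or_nonempty with hempty | hne
  · have := hF.card_pos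
    rw [hempty, sum_empty] at hsplit
    omega
  · have hlt := ha.2 _ hne
    have hle : kappa ends F (univ.erase v) ≤ #F := card_filter_le _ _
    omega

lemma topExponents_empty_of_unique [Unique V] : topExponents ends ∅ = {fun _ => -1} := by
  ext a
  constructor
  · rintro ⟨hsum, -⟩
    ext x
    simpa [Unique.eq_default x] using hsum
  · rintro rfl
    refine ⟨by simp, fun S hS => ?_⟩
    simpa [kappa] using hS

lemma topExponents_empty_of_card_ne_one (hV : Fintype.card V ≠ 1) : topExponents ends ∅ = ∅ := by
  refine Set.eq_empty_of_forall_notMem fun a ⟨hsum, hlt⟩ => ?_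
  have hle : ∑ v, a v ≤ ∑ _v : V, (-1 : ℤ) := sum_le_sum fun v _ => by
    have := hlt {v} (singleton_nonempty v)
    simp only [sum_singleton, kappa, filter_empty, card_empty] at this
    omega
  have : Fintype.card V ≠ 0 := fun h => by
    rw [Fintype.card_eq_zero_iff] at h
    simp at hsum
  simp only [sum_const, card_univ, nsmul_eq_mul, card_empty] at hsum hle
  omega

variable [DecidableEq E] {F : Finset E} {e : E} {u v : V}

lemma sub_single_mem_topExponents_iff (he : e ∉ F) (hends : ends e = s(u, v)) (b : V → ℤ) :
    b - Pi.single u 1 ∈ topExponents ends F ↔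
      b ∈ topExponents ends (insert e F) ∧ ¬ HasTightSet ends F u v b := by
  simp only [topExponents, HasTightSet, Set.mem_ofPred_eq, sum_sub_single,
    kappa_insert ends he hends, card_insert_of_notMem he, mem_univ, if_true]
  push_cast
  constructor
  · rintro ⟨hsum, hlt⟩
    refine ⟨⟨by linarith, fun S hS => ?_⟩, fun ⟨S, hvS, huS, htight⟩ => ?_⟩
    · grind
    · grind [hlt S ⟨v, hvS⟩]
  · rintro ⟨⟨hsum, hlt⟩, hslack⟩
    refine ⟨by linarith, fun S hS => ?_⟩
    grind [hlt S hS]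

lemma encard_topExponents_insert (he : e ∉ F) (hends : ends e = s(u, v)) :
    (topExponents ends (insert e F)).encard = (topExponents ends F).encard +
      {b ∈ topExponents ends (insert e F) | HasTightSet ends F u v b}.encard := by
  have hslack : (· - Pi.single u 1) ⁻¹' topExponents ends F =
      topExponents ends (insert e F) \
        {b ∈ topExponents ends (insert e F) | HasTightSet ends F u v b} := by
    ext b
    rw [Set.mem_preimage, sub_single_mem_topExponents_iff he hends]
    simp only [Set.mem_sdiff, Set.mem_sep_iff]
    tauto
  rw [← Set.encard_sdiff_add_encard_of_subset (Set.sep_subset (topExponents ends (insert e F)) _),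
    ← hslack]
  congr 1
  exact Set.encard_preimage_of_bijective (Equiv.subRight (Pi.single u 1)).bijective _

lemma encard_topExponents_insert_loop (he : e ∉ F) (hends : ends e = s(u, u)) :
    (topExponents ends (insert e F)).encard = (topExponents ends F).encard := by
  have hempty : {b ∈ topExponents ends (insert e F) | HasTightSet ends F u u b} = ∅ :=
    Set.sep_eq_empty_iff_mem_false.2 fun b _ ⟨_, hmem, hnotMem, _⟩ => hnotMem hmem
  rw [encard_topExponents_insert he hends, hempty, Set.encard_empty, add_zero]

lemma contractVector_mem_topExponents_iff (he : e ∉ F) (hends : ends e = s(u, v)) (huv : u ≠ v)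
    (b : V → ℤ) :
    contractVector huv b ∈ topExponents (Sym2.map (merge huv) ∘ ends) F ↔
      ∑ x, b x = #(insert e F) - 1 ∧ ∀ S : Finset V, S.Nonempty → (u ∈ S ↔ v ∈ S) →
        ∑ x ∈ S, b x < kappa ends (insert e F) S := by
  simp only [topExponents, Set.mem_ofPred_eq, sum_contractVector, kappa_map,
    kappa_insert ends he hends, card_insert_of_notMem he, mem_univ, filter_true, if_true]
  push_cast
  refine and_congr (by omega) ⟨fun h S hS hSuv => ?_, fun h T hT => ?_⟩
  · have hT : (S.subtype (· ≠ v)).Nonempty := by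
      obtain ⟨x, hx⟩ := hS
      by_cases hxv : x = v
      · exact ⟨⟨u, huv⟩, by grind⟩
      · exact ⟨⟨x, hxv⟩, by simpa using hx⟩
    have := h _ hT
    rw [filter_merge_mem_subtype huv hSuv] at this
    simp only [mem_subtype] at this
    grind
  · obtain ⟨w, hw⟩ := hT
    have := h {x | merge huv x ∈ T} ⟨w, by simpa [merge_coe] using hw⟩
      (by simp [merge_left, merge_right])
    simp only [mem_filter, mem_univ, true_and, merge_left, merge_right, or_self] at this
    grind

lemma apply_right_le_of_hasTightSet (he : e ∉ F) (hends : ends e = s(u, v)) {huv : u ≠ v}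
    {a b : V → ℤ} (ha : a ∈ topExponents ends (insert e F)) (hb : HasTightSet ends F u v b)
    (hab : contractVector huv a = contractVector huv b) : a v ≤ b v := by
  obtain ⟨S, hvS, huS, htight⟩ := hb
  have hlt := ha.2 S ⟨v, hvS⟩
  rw [(contractVector_eq_iff huv a b).1 hab, sum_transfer, kappa_insert ends he hends] at hlt
  simp only [hvS, huS, or_true, if_true, if_false] at hlt
  push_cast at hlt
  linarith

lemma bijOn_contractVector (he : e ∉ F) (hends : ends e = s(u, v)) (huv : u ≠ v) :
    Set.BijOn (contractVector huv)
      {b ∈ topExponents ends (insert e F) | HasTightSet ends F u v b}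
      (topExponents (Sym2.map (merge huv) ∘ ends) F) := by
  refine ⟨fun b hb => ?_, fun a ha b hb hab => ?_, fun c hc => ?_⟩
  · exact (contractVector_mem_topExponents_iff he hends huv b).2
      ⟨hb.1.1, fun S hS _ => hb.1.2 S hS⟩
  · have hle := apply_right_le_of_hasTightSet he hends hb.1 ha.2 hab.symm
    have hge := apply_right_le_of_hasTightSet he hends ha.1 hb.2 hab
    rw [contractVector_eq_iff, le_antisymm hge hle] at hab
    simpa [transfer] using hab
  · obtain ⟨b, rfl⟩ := contractVector_surjective huv c
    obtain ⟨-, hlt⟩ := (contractVector_mem_topExponents_iff he hends huv b).1 hc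
    have hb : ∀ S, (u ∈ S ↔ v ∈ S) → ∑ x ∈ S, b x ≤ kappa ends F S := fun S hSuv => by
      rcases S.eq_empty_or_nonempty with rfl | hS
      · simp
      · have := hlt S hS hSuv
        rw [kappa_insert ends he hends] at this
        grind
    obtain ⟨l, hle, htight⟩ := exists_transfer_le_of_submodular
      (fun A B => mod_cast kappa_union_add_kappa_inter_le ends F A B) huv hb
    rw [← contractVector_transfer huv l b] at hc ⊢
    obtain ⟨hsum', hlt'⟩ := (contractVector_mem_topExponents_iff he hends huv _).1 hc
    refine ⟨_, ⟨⟨hsum', fun S hS => ?_⟩, htight⟩, rfl⟩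
    by_cases hSuv : u ∈ S ↔ v ∈ S
    · exact hlt' S hS hSuv
    · have := hle S
      rw [kappa_insert ends he hends]
      grind

end TopExponents

section SpanningTrees

variable (ends : E → Sym2 V)

lemma underlyingGraph_eq_fromEdgeSet (T : Set E) :
    underlyingGraph ends T = SimpleGraph.fromEdgeSet (ends '' T) := by
  ext x y
  simp [underlyingGraph, Sym2.eq_swap (a := y), and_comm]

/-- `T` is the edge set of a spanning tree of the multigraph. Loops are excluded by the number of
edges, see `IsSpanningTree.not_isDiag`. -/
def IsSpanningTree (T : Finset E) : Prop :=
  (underlyingGraph ends (T : Set E)).Connected ∧ #T + 1 = Nat.card V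

/-- The spanning trees with all edges in `F`. -/
def spanningTrees (F : Finset E) : Set (Finset E) :=
  {T | T ⊆ F ∧ IsSpanningTree ends T}

variable {ends}

lemma IsSpanningTree.not_isDiag {T : Finset E} (hT : IsSpanningTree ends T) {e : E} (he : e ∈ T) :
    ¬ (ends e).IsDiag := by
  classical
  intro hdiag
  have hsub : (underlyingGraph ends (T : Set E)).edgeSet ⊆ ((T.erase e).image ends : Finset _) := by
    rw [underlyingGraph_eq_fromEdgeSet, SimpleGraph.edgeSet_fromEdgeSet]
    rintro _ ⟨⟨f, hf, rfl⟩, hfdiag⟩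
    have hfe : f ≠ e := fun h => hfdiag (h ▸ hdiag)
    exact mem_coe.2 (mem_image_of_mem _ (mem_erase.2 ⟨hfe, hf⟩))
  have hcard : Nat.card (underlyingGraph ends (T : Set E)).edgeSet ≤ #(T.erase e) :=
    by
    grw [Nat.card_mono (finite_toSet _) hsub, Nat.card_eq_card_toFinset, toFinset_coe,
      card_image_le]
  have := hT.1.card_vert_le_card_edgeSet_add_one
  have := card_erase_add_one he
  have := hT.2
  omega

lemma spanningTrees_insert_loop [DecidableEq E] {F : Finset E} {e : E}
    (hdiag : (ends e).IsDiag) :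
    spanningTrees ends (insert e F) = spanningTrees ends F := by
  ext T
  refine ⟨fun ⟨hTF, hT⟩ => ⟨?_, hT⟩, fun ⟨hTF, hT⟩ => ⟨hTF.trans (subset_insert _ _), hT⟩⟩
  exact (subset_insert_iff_of_notMem fun he => hT.not_isDiag he hdiag).1 hTF

lemma spanningTrees_empty_of_card_eq_one (hV : Nat.card V = 1) : spanningTrees ends ∅ = {∅} := by
  obtain ⟨_, _⟩ := Nat.card_eq_one_iff_unique.1 hV
  have hempty : IsSpanningTree ends ∅ := by
    refine ⟨?_, by simp⟩
    rw [coe_empty, underlyingGraph_eq_fromEdgeSet, Set.image_empty, SimpleGraph.fromEdgeSet_empty]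
    exact SimpleGraph.connected_bot_iff.2 ⟨‹_›, ‹_›⟩
  ext T
  exact ⟨fun hT => subset_empty.1 hT.1, by rintro rfl; exact ⟨Subset.rfl, hempty⟩⟩

lemma spanningTrees_empty_of_card_ne_one (hV : Nat.card V ≠ 1) : spanningTrees ends ∅ = ∅ := by
  refine Set.eq_empty_of_forall_notMem fun T ⟨hTF, _, hcard⟩ => hV ?_
  rw [← hcard, subset_empty.1 hTF, card_empty]

lemma underlyingGraph_adj {T : Set E} {x y : V} :
    (underlyingGraph ends T).Adj x y ↔ x ≠ y ∧ ∃ e ∈ T, ends e = s(x, y) := by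
  rw [underlyingGraph_eq_fromEdgeSet, SimpleGraph.fromEdgeSet_adj, and_comm]
  rfl

lemma underlyingGraph_reachable_of_mem {T : Set E} {e : E} (he : e ∈ T) {x y : V}
    (hends : ends e = s(x, y)) : (underlyingGraph ends T).Reachable x y := by
  by_cases hxy : x = y
  · rw [hxy]
  · exact (underlyingGraph_adj.2 ⟨hxy, e, he, hends⟩).reachable

lemma reachable_of_forall_adj_reachable {W : Type*} {G : SimpleGraph V} {H : SimpleGraph W}
    (φ : V → W) (hφ : ∀ x y, G.Adj x y → H.Reachable (φ x) (φ y)) {x y : V}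
    (hxy : G.Reachable x y) : H.Reachable (φ x) (φ y) := by
  simp only [SimpleGraph.reachable_iff_reflTransGen] at hφ hxy ⊢
  exact hxy.lift' φ hφ

variable [DecidableEq V] {u v : V}

lemma underlyingGraph_reachable_merge {T : Set E} {e : E} (hends : ends e = s(u, v))
    (huv : u ≠ v) (x : V) : (underlyingGraph ends (insert e T)).Reachable x (merge huv x) := by
  by_cases hx : x = v
  · rw [hx, merge_right]
    exact (underlyingGraph_reachable_of_mem (Set.mem_insert e T) hends).symm
  · rw [merge_of_ne huv hx]

lemma underlyingGraph_reachable_merge_iff {T : Set E} {e : E} (hends : ends e = s(u, v))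
    (huv : u ≠ v) (x y : V) :
    (underlyingGraph (Sym2.map (merge huv) ∘ ends) T).Reachable (merge huv x) (merge huv y) ↔
      (underlyingGraph ends (insert e T)).Reachable x y := by
  have hmerge := underlyingGraph_reachable_merge (T := T) hends huv
  refine ⟨fun hxy => ?_, reachable_of_forall_adj_reachable _ fun x y hadj => ?_⟩
  · refine (hmerge x).trans <| .trans ?_ (hmerge y).symm
    refine reachable_of_forall_adj_reachable _ (fun w w' hadj => ?_) hxy
    obtain ⟨-, f, hf, hfends⟩ := underlyingGraph_adj.1 hadj
    induction hpq : ends f with | h p q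
    have hreach := (hmerge p).symm.trans <|
      (underlyingGraph_reachable_of_mem (Set.mem_insert_of_mem e hf) hpq).trans (hmerge q)
    rw [Function.comp_apply, hpq, Sym2.map_mk, Sym2.eq_iff] at hfends
    rcases hfends with ⟨rfl, rfl⟩ | ⟨rfl, rfl⟩
    exacts [hreach, hreach.symm]
  · obtain ⟨-, f, rfl | hf, hfends⟩ := underlyingGraph_adj.1 hadj
    · rw [hends, Sym2.eq_iff] at hfends
      rcases hfends with ⟨rfl, rfl⟩ | ⟨rfl, rfl⟩ <;> rw [merge_left, merge_right]
    · exact underlyingGraph_reachable_of_mem hf (by simp [hfends])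

lemma underlyingGraph_connected_insert_iff {T : Set E} {e : E} (hends : ends e = s(u, v))
    (huv : u ≠ v) :
    (underlyingGraph ends (insert e T)).Connected ↔
      (underlyingGraph (Sym2.map (merge huv) ∘ ends) T).Connected := by
  have hsurj : Function.Surjective (merge huv) := fun w => ⟨w, merge_coe huv w⟩
  simp only [SimpleGraph.connected_iff, SimpleGraph.Preconnected, hsurj.forall,
    underlyingGraph_reachable_merge_iff hends huv]
  exact and_congr_right' ⟨fun _ => ⟨⟨u, huv⟩⟩, fun _ => ⟨u⟩⟩

lemma isSpanningTree_insert_iff [Finite V] [DecidableEq E] {T : Finset E} {e : E}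
    (he : e ∉ T) (hends : ends e = s(u, v)) (huv : u ≠ v) :
    IsSpanningTree ends (insert e T) ↔ IsSpanningTree (Sym2.map (merge huv) ∘ ends) T := by
  have hcard : Nat.card {x // x ≠ v} + 1 = Nat.card V := by
    cases nonempty_fintype V
    have := Fintype.card_pos_iff.2 ⟨v⟩
    simp only [Nat.card_eq_fintype_card, Fintype.card_subtype_compl, Fintype.card_unique]
    omega
  rw [IsSpanningTree, IsSpanningTree, coe_insert, underlyingGraph_connected_insert_iff hends huv,
    card_insert_of_notMem he, ← hcard, add_left_inj]

lemma encard_spanningTrees_insert [Finite V] [DecidableEq E] {F : Finset E} {e : E} (he : e ∉ F)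
    (hends : ends e = s(u, v)) (huv : u ≠ v) :
    (spanningTrees ends (insert e F)).encard = (spanningTrees ends F).encard +
      (spanningTrees (Sym2.map (merge huv) ∘ ends) F).encard := by
  have hunion : spanningTrees ends (insert e F) = spanningTrees ends F ∪
      insert e '' spanningTrees (Sym2.map (merge huv) ∘ ends) F := by
    ext T
    constructor
    · rintro ⟨hTF, hT⟩
      by_cases heT : e ∈ T
      · rw [← insert_erase heT, isSpanningTree_insert_iff (notMem_erase e T) hends huv] at hT
        exact .inr ⟨T.erase e, ⟨subset_insert_iff.1 hTF, hT⟩, insert_erase heT⟩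
      · exact .inl ⟨(subset_insert_iff_of_notMem heT).1 hTF, hT⟩
    · rintro (⟨hTF, hT⟩ | ⟨T, ⟨hTF, hT⟩, rfl⟩)
      · exact ⟨hTF.trans (subset_insert _ _), hT⟩
      · exact ⟨insert_subset_insert _ hTF,
          (isSpanningTree_insert_iff (fun heT => he (hTF heT)) hends huv).2 hT⟩
  have hdisj : Disjoint (spanningTrees ends F)
      (insert e '' spanningTrees (Sym2.map (merge huv) ∘ ends) F) := by
    rw [Set.disjoint_left]
    rintro _ ⟨hTF, -⟩ ⟨T, -, rfl⟩
    exact he (hTF (mem_insert_self e T))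
  have hinj : Set.InjOn (insert e) (spanningTrees (Sym2.map (merge huv) ∘ ends) F) := by
    intro T hT T' hT' h
    rw [← erase_insert fun heT => he (hT.1 heT), h, erase_insert fun heT => he (hT'.1 heT)]
  rw [hunion, Set.encard_union_eq hdisj, hinj.encard_image]

end SpanningTrees

lemma encard_topExponents_empty [Fintype V] [DecidableEq V] (ends : E → Sym2 V) :
    (topExponents ends ∅).encard = (spanningTrees ends ∅).encard := by
  by_cases hV : Nat.card V = 1
  · obtain ⟨_, ⟨v⟩⟩ := Nat.card_eq_one_iff_unique.1 hV
    let _ : Unique V := uniqueOfSubsingleton v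
    rw [topExponents_empty_of_unique, spanningTrees_empty_of_card_eq_one hV,
      Set.encard_singleton, Set.encard_singleton]
  · rw [topExponents_empty_of_card_ne_one (Nat.card_eq_fintype_card (α := V) ▸ hV),
      spanningTrees_empty_of_card_ne_one hV]
    simp only [Set.encard_empty]

theorem encard_topExponents_eq_encard_spanningTrees (F : Finset E) :
    ∀ {V : Type*} [Fintype V] [DecidableEq V] (ends : E → Sym2 V),
      (topExponents ends F).encard = (spanningTrees ends F).encard := by
  classical
  induction F using Finset.induction_on with
  | empty => exact fun ends => encard_topExponents_empty ends
  | insert e F he ih =>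
    intro V _ _ ends
    induction hends : ends e with | h u v
    by_cases huv : u = v
    · subst huv
      rw [encard_topExponents_insert_loop he hends, ih,
        spanningTrees_insert_loop (hends ▸ Sym2.mk_isDiag_iff.2 rfl)]
    · have hbij := bijOn_contractVector he hends huv
      rw [encard_topExponents_insert he hends, ← hbij.injOn.encard_image, hbij.image_eq, ih, ih,
        encard_spanningTrees_insert he hends huv]

section NatVectors

variable [Fintype V] [Fintype E] (ends : E → Sym2 V)

lemma image_natCast_eq_topExponents_univ [DecidableEq V] [Nonempty E] :
    (fun (a : V → ℕ) v => (a v : ℤ)) '' {a | ∑ v, a v = Fintype.card E - 1 ∧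
      ∀ S : Finset V, S.Nonempty → ∑ v ∈ S, a v < multigraphKappa ends S} =
      topExponents ends univ := by
  have hE : 0 < Fintype.card E := Fintype.card_pos
  have hmem : ∀ a : V → ℕ, (fun v => (a v : ℤ)) ∈ topExponents ends univ ↔
      ∑ v, a v = Fintype.card E - 1 ∧
        ∀ S : Finset V, S.Nonempty → ∑ v ∈ S, a v < multigraphKappa ends S := fun a => by
    simp only [topExponents, Set.mem_ofPred_eq, kappa_univ_left, card_univ]
    refine and_congr (by rw [← Nat.cast_sum]; omega) ?_
    norm_cast
  ext a
  refine ⟨?_, fun ha => ?_⟩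
  · rintro ⟨a, ha, rfl⟩
    exact (hmem a).2 ha
  · lift a to V → ℕ using nonneg_of_mem_topExponents univ_nonempty ha
    exact ⟨a, (hmem a).1 ha, rfl⟩

lemma spanningTrees_univ [Nonempty V] :
    spanningTrees ends univ = {T : Finset E | (∀ e ∈ T, ¬ (ends e).IsDiag) ∧
        #T = Fintype.card V - 1 ∧ (underlyingGraph ends (T : Set E)).Connected} := by
  ext T
  have hV : 0 < Fintype.card V := Fintype.card_pos
  refine ⟨fun ⟨_, hT⟩ => ⟨fun e => hT.not_isDiag, ?_, hT.1⟩,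
    fun ⟨_, hcard, hconn⟩ => ⟨subset_univ T, hconn, ?_⟩⟩
  · have := hT.2
    rw [Nat.card_eq_fintype_card] at this
    omega
  · rw [Nat.card_eq_fintype_card]
    omega

end NatVectors

end Multigraph

theorem central_top_dim_eq_card_spanningTrees_general
    {V E : Type*} [Fintype V] [Fintype E] [DecidableEq V]
    (ends : E → Sym2 V) [Nonempty E] :
    Set.ncard {a : V → ℕ | ∑ v : V, a v = Fintype.card E - 1 ∧
        ∀ S : Finset V, S.Nonempty → ∑ v ∈ S, a v < multigraphKappa ends S} =
      Set.ncard {T : Finset E | (∀ e ∈ T, ¬ (ends e).IsDiag) ∧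
        T.card = Fintype.card V - 1 ∧
        (underlyingGraph ends (↑T : Set E)).Connected} := by
  have : Nonempty V := ⟨(ends (Classical.arbitrary E)).out.1⟩
  have hcast : Function.Injective fun (a : V → ℕ) v => (a v : ℤ) :=
    Nat.cast_injective.comp_left
  rw [← Set.ncard_image_of_injective _ hcast, Multigraph.image_natCast_eq_topExponents_univ,
    ← Multigraph.spanningTrees_univ, Set.ncard, Set.ncard,
    Multigraph.encard_topExponents_eq_encard_spanningTrees]

/-- For a connected multigraph `G`, the number of vectors `a : V → ℕ` of total
weight `|E| − 1` with `∑_{v∈S} a v < κ_S` for all nonempty `S ⊆ V` (the dimension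
of the top graded component of the central bizonotopal algebra `B_G^c`) equals the
number of spanning trees of `G`. -/
theorem central_top_dim_eq_card_spanningTrees
    {V E : Type*} [Fintype V] [Fintype E] [DecidableEq V]
    (ends : E → Sym2 V) [Nonempty E]
    (hconn : (underlyingGraph ends Set.univ).Connected) :
    Set.ncard {a : V → ℕ | ∑ v : V, a v = Fintype.card E - 1 ∧
        ∀ S : Finset V, S.Nonempty → ∑ v ∈ S, a v < multigraphKappa ends S} =
      Set.ncard {T : Finset E | (∀ e ∈ T, ¬ (ends e).IsDiag) ∧
        T.card = Fintype.card V - 1 ∧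
        (underlyingGraph ends (↑T : Set E)).Connected} :=
  central_top_dim_eq_card_spanningTrees_general ends
end

section
/- For every integer n ≥ 4, the number of vectors b : Fin n → ℕ such that ∑_{i} b_i = n(n−1)/2 − 2 and, for every nonempty subset I ⊆ Fin n, ∑_{i∈I} b_i + 2 ≤ |I|(|I|−1)/2 + |I|·(n−|I|), equals (n−2)(n−3)/2 · n^{n−4}. -/
open Finset

/-!
Complementing the subsets turns the upper bounds on `b` into the lower bounds `C(|K|, 2)` on the
sums over proper subsets `K`: those of the permutohedron of `K_n`, but the total is two less.
Adding a unit vector at a vertex `r` gives a point whose total is one less than on the permutohedron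
(a trimmed point), with no proper subset containing `r` whose bound is attained; so we count the
trimmed points and subtract those having a tight proper subset containing `r`.

* Trimmed points are unique representatives of the vectors of their total modulo the image of the
  Laplacian of `K_n`: minimising `∑ x i ^ 2` over a class produces one, and firing any nonconstant
  function violates the bound of the set where it is minimal. Hence there are `n ^ (n - 2)` of them.
* A trimmed point with a tight subset containing `r` splits, along the smallest such subset `J`,
  into trimmed points on `J` and on `Jᶜ`. Hence there are `∑ J ∋ r, T(|J|) T(n - |J|)` of them,
  where `T(k) = k ^ (k - 2)` counts spanning trees and `T(0) = 0`. Abel's binomial identities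
  evaluate this sum: `n ^ 4` times its double is `(n - 1) (n + 6) n ^ n`.
-/

section AbelSums

theorem choose_mul_choose_sub_eq (m k j : ℕ) :
    m.choose k * (m - k).choose j = m.choose j * (m - j).choose k := by
  have hk := Nat.choose_mul (n := m) (Nat.le_add_left k j)
  have hj := Nat.choose_mul (n := m) (Nat.le_add_right j k)
  rw [← Nat.choose_symm_add, hj] at hk
  simpa using hk.symm

theorem sum_choose_mul_pow_mul_sub_pow {R : Type*} [CommRing R] (w : R → R) (m : ℕ) (z : R) :
    ∑ k ∈ range (m + 1), (m.choose k : R) * ((k : R) ^ k * w k) * (z - k) ^ (m - k) =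
      ∑ i ∈ range (m + 1),
        (m.choose i : R) * z ^ (m - i) * (fwdDiff 1)^[i] (fun r : R ↦ r ^ i * w r) 0 := by
  rw [← sum_flip fun i ↦
    (m.choose i : R) * z ^ (m - i) * (fwdDiff 1)^[i] (fun r : R ↦ r ^ i * w r) 0]
  simp only [sub_eq_add_neg z, add_pow, fwdDiff_iter_eq_sum_shift, mul_sum, zero_add]
  rw [sum_comm' (t' := range (m + 1)) (s' := fun j ↦ range (m - j + 1)) (by grind)]
  refine sum_congr rfl fun j hj ↦ sum_congr rfl fun k hk ↦ ?_
  have hjk : j + k ≤ m := by grind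
  have hchoose : (m.choose k : R) * (m - k).choose j = m.choose j * (m - j).choose k := by
    exact_mod_cast congrArg (Nat.cast (R := R)) (choose_mul_choose_sub_eq m k j)
  have hsub : m - (m - j) = j := by lia
  have hpow : (k : R) ^ (m - j) = k ^ k * k ^ (m - j - k) := by
    rw [← pow_add]; congr 1; lia
  rw [Nat.choose_symm (by lia : j ≤ m), hsub, Nat.sub_right_comm m k j, neg_pow (k : R)]
  simp only [nsmul_one, zsmul_eq_mul, hpow]
  push_cast
  linear_combination ((k : R) ^ k * w k * z ^ j * ((-1) ^ (m - j - k) * k ^ (m - j - k))) * hchoose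

variable {K : Type*} [Field K]

theorem fwdDiff_iter_pow_mul_inv_pow_eq_zero {a i : ℕ} (ha : a ≠ 0) (hai : a < i) :
    (fwdDiff 1)^[i] (fun r : K ↦ r ^ i * (r ^ a)⁻¹) = 0 := by
  have h : (fun r : K ↦ r ^ i * (r ^ a)⁻¹) = fun r ↦ r ^ (i - a) := by
    funext r
    rcases eq_or_ne r 0 with rfl | hr
    · simp [ha, (Nat.sub_pos_of_lt hai).ne']
    · rw [pow_sub₀ r hr hai.le]
  rw [h, fwdDiff_iter_pow_eq_zero_of_lt (by lia)]

theorem sum_choose_mul_pow_mul_inv_pow_mul_sub_pow {a : ℕ} (ha : a ≠ 0) (m : ℕ) (z : K) :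
    ∑ k ∈ range (m + 1), (m.choose k : K) * ((k : K) ^ k * ((k : K) ^ a)⁻¹) * (z - k) ^ (m - k) =
      ∑ i ∈ Icc 1 a,
        (m.choose i : K) * z ^ (m - i) * (fwdDiff 1)^[i] (fun r : K ↦ r ^ i * (r ^ a)⁻¹) 0 := by
  rw [sum_choose_mul_pow_mul_sub_pow fun r ↦ (r ^ a)⁻¹]
  refine sum_congr_of_eq_on_inter (fun i _ hi ↦ ?_) (fun i _ hi ↦ ?_) fun _ _ _ ↦ rfl
  · rcases Nat.eq_zero_or_pos i with rfl | hpos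
    · simp [ha]
    · have hai : a < i := by grind
      simp [fwdDiff_iter_pow_mul_inv_pow_eq_zero ha hai]
  · have hmi : m < i := by grind
    simp [Nat.choose_eq_zero_of_lt hmi]

theorem sum_choose_mul_pow_mul_inv_mul_sub_pow (m : ℕ) (z : K) :
    ∑ k ∈ range (m + 1), (m.choose k : K) * ((k : K) ^ k * (k : K)⁻¹) * (z - k) ^ (m - k) =
      m * z ^ (m - 1) := by
  simpa [fwdDiff] using sum_choose_mul_pow_mul_inv_pow_mul_sub_pow one_ne_zero m z

theorem sum_choose_mul_pow_mul_inv_sq_mul_sub_pow [CharZero K] (m : ℕ) (z : K) :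
    ∑ k ∈ range (m + 1), (m.choose k : K) * ((k : K) ^ k * ((k : K) ^ 2)⁻¹) * (z - k) ^ (m - k) =
      m * z ^ (m - 1) - m.choose 2 * z ^ (m - 2) := by
  rw [sum_choose_mul_pow_mul_inv_pow_mul_sub_pow two_ne_zero, show Icc 1 2 = {1, 2} from rfl,
    sum_pair (by decide)]
  norm_num [fwdDiff]
  ring

end AbelSums

section TreeCount

/-- The number `n ^ (n - 2)` of spanning trees of `K_n`, and `0` for the empty graph. -/
def treeCount (n : ℕ) : ℕ :=
  if n = 0 then 0 else n ^ (n - 2)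

theorem treeCount_zero : treeCount 0 = 0 := rfl

theorem cast_treeCount (n : ℕ) : (treeCount n : ℚ) = n ^ n * ((n : ℚ) ^ 2)⁻¹ := by
  match n with
  | 0 => simp [treeCount]
  | 1 => simp [treeCount]
  | n + 2 =>
    have : ((n + 2 : ℕ) : ℚ) ≠ 0 := by positivity
    rw [treeCount, if_neg (by lia), Nat.add_sub_cancel, Nat.cast_pow]
    field_simp
    rw [← pow_add]

/-- `∑ C(n, k) T_k T_l k ^ a l ^ b` over `k + l = n`, where `T` is `treeCount`: the number of
ordered pairs of disjoint trees covering `n` labelled vertices, with `a` marked vertices (possibly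
equal) in the first tree and `b` in the second. -/
def markedTreePairs (n a b : ℕ) : ℕ :=
  ∑ p ∈ antidiagonal n, n.choose p.1 * (treeCount p.1 * treeCount p.2) * (p.1 ^ a * p.2 ^ b)

theorem markedTreePairs_comm (n a b : ℕ) : markedTreePairs n a b = markedTreePairs n b a := by
  unfold markedTreePairs
  rw [← Nat.sum_antidiagonal_swap]
  refine sum_congr rfl fun p hp ↦ ?_
  rw [Prod.fst_swap, Prod.snd_swap, ← Nat.choose_symm_of_eq_add (mem_antidiagonal.1 hp).symm]
  ring

theorem markedTreePairs_succ_add_succ (n a b : ℕ) :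
    markedTreePairs n (a + 1) b + markedTreePairs n a (b + 1) = n * markedTreePairs n a b := by
  unfold markedTreePairs
  rw [← sum_add_distrib, mul_sum]
  refine sum_congr rfl fun p hp ↦ ?_
  rw [← mem_antidiagonal.1 hp]
  ring

/- The power `l ^ 2` cancels the denominator of `T_l` except at `l = 0`, where `0 ^ 0 = 1` but
`T_0 * 0 ^ 2 = 0`; hence the extra term on the left. -/
theorem cast_markedTreePairs_two_add (n a : ℕ) :
    (markedTreePairs n a 2 : ℚ) + treeCount n * n ^ a =
      ∑ k ∈ range (n + 1), (n.choose k : ℚ) * (treeCount k * k ^ a) * ((n : ℚ) - k) ^ (n - k) := by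
  rw [markedTreePairs, Nat.sum_antidiagonal_eq_sum_range_succ
    fun k l ↦ n.choose k * (treeCount k * treeCount l) * (k ^ a * l ^ 2),
    sum_range_succ, sum_range_succ _ n]
  simp only [Nat.sub_self, treeCount_zero, mul_zero, zero_mul, add_zero, sub_self, pow_zero,
    mul_one, Nat.choose_self, Nat.cast_one, one_mul]
  push_cast
  refine congrArg (· + _) (sum_congr rfl fun k hk ↦ ?_)
  have hkn : k < n := mem_range.1 hk
  have hpos : ((n - k : ℕ) : ℚ) ≠ 0 := Nat.cast_ne_zero.2 (by lia)
  rw [← Nat.cast_sub hkn.le, cast_treeCount (n - k)]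
  field_simp

theorem sq_mul_cast_markedTreePairs_zero_two {n : ℕ} (hn : n ≠ 0) :
    (n : ℚ) ^ 2 * markedTreePairs n 0 2 = ((n : ℚ) - 1) * (n + 2) / 2 * n ^ n := by
  have habel := cast_markedTreePairs_two_add n 0
  simp only [pow_zero, mul_one, cast_treeCount] at habel
  rw [sum_choose_mul_pow_mul_inv_sq_mul_sub_pow, Nat.cast_choose_two, mul_pow_sub_one hn] at habel
  have hinv : (n : ℚ) ^ 2 * ((n : ℚ) ^ 2)⁻¹ = 1 := mul_inv_cancel₀ (by simpa)
  have hpow : (n : ℚ) ^ 2 * ((n - 1) * (n : ℚ) ^ (n - 2)) = (n - 1) * n ^ n := by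
    rcases eq_or_ne n 1 with rfl | hn1
    · simp
    · rw [mul_left_comm, ← pow_add, show 2 + (n - 2) = n by lia]
  linear_combination (n : ℚ) ^ 2 * habel - (n : ℚ) ^ n * hinv - (n : ℚ) / 2 * hpow

theorem mul_cast_markedTreePairs_one_two {n : ℕ} (hn : n ≠ 0) :
    (n : ℚ) * markedTreePairs n 1 2 = ((n : ℚ) - 1) * n ^ n := by
  have hmul (k : ℕ) : (treeCount k : ℚ) * k ^ 1 = k ^ k * (k : ℚ)⁻¹ := by
    rw [cast_treeCount]
    rcases eq_or_ne (k : ℚ) 0 with hk | hk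
    · simp [hk]
    · field_simp
  have habel := cast_markedTreePairs_two_add n 1
  simp only [hmul] at habel
  rw [sum_choose_mul_pow_mul_inv_mul_sub_pow, mul_pow_sub_one hn] at habel
  have hinv : (n : ℚ) * (n : ℚ)⁻¹ = 1 := mul_inv_cancel₀ (by simpa)
  linear_combination (n : ℚ) * habel - (n : ℚ) ^ n * hinv

theorem pow_four_mul_markedTreePairs_zero_zero {n : ℕ} (hn : n ≠ 0) :
    (n : ℚ) ^ 4 * markedTreePairs n 0 0 = ((n : ℚ) - 1) * (n + 6) * n ^ n := by
  have hrec₁₁ := markedTreePairs_succ_add_succ n 1 1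
  have hrec₀₁ := markedTreePairs_succ_add_succ n 0 1
  have hrec₀₀ := markedTreePairs_succ_add_succ n 0 0
  rw [markedTreePairs_comm n 2 1] at hrec₁₁
  rw [markedTreePairs_comm n 1 0] at hrec₀₀
  qify at hrec₁₁ hrec₀₁ hrec₀₀
  have hreduce : (n : ℚ) ^ 4 * markedTreePairs n 0 0 =
      4 * (n * markedTreePairs n 1 2) + 2 * (n ^ 2 * markedTreePairs n 0 2) := by
    linear_combination -(n : ℚ) ^ 3 * hrec₀₀ - 2 * (n : ℚ) ^ 2 * hrec₀₁ - 2 * n * hrec₁₁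
  rw [hreduce, mul_cast_markedTreePairs_one_two hn, sq_mul_cast_markedTreePairs_zero_two hn]
  ring

theorem two_mul_sum_treeCount_mul_treeCount_compl {α : Type*} [Fintype α] [DecidableEq α] (r : α) :
    2 * ∑ J : Finset α with r ∈ J, treeCount #J * treeCount #Jᶜ =
      markedTreePairs (Fintype.card α) 0 0 := by
  have hcompl : ∑ J : Finset α with r ∈ J, treeCount #J * treeCount #Jᶜ =
      ∑ J : Finset α with r ∉ J, treeCount #J * treeCount #Jᶜ :=
    sum_nbij' compl compl (by simp) (by simp) (by simp) (by simp) (by simp [mul_comm])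
  calc 2 * ∑ J : Finset α with r ∈ J, treeCount #J * treeCount #Jᶜ
      = ∑ J : Finset α, treeCount #J * treeCount #Jᶜ := by
        rw [two_mul, ← sum_filter_add_sum_filter_not univ (r ∈ ·), ← hcompl]
    _ = ∑ k ∈ range (Fintype.card α + 1), (Fintype.card α).choose k *
          (treeCount k * treeCount (Fintype.card α - k)) := by
        simpa [card_compl] using sum_powerset_apply_card
          (fun k ↦ treeCount k * treeCount (Fintype.card α - k)) (x := (univ : Finset α))
    _ = markedTreePairs (Fintype.card α) 0 0 := by
        simp [markedTreePairs, Nat.sum_antidiagonal_eq_sum_range_succ_mk]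

end TreeCount

theorem choose_two_add (a b : ℕ) : (a + b).choose 2 = a.choose 2 + b.choose 2 + a * b := by
  qify
  simp only [Nat.cast_choose_two]
  push_cast
  ring

section Trimmed

variable {α : Type*} {J K : Finset α} {x : α → ℤ}

/-- `x` restricts on `J` to a lattice point of the trimmed permutohedron of `J`: the lower bounds
`C(|K|, 2)` on the sums over proper subsets `K` are those of the permutohedron with vertices the
permutations of `0, 1, …, |J| - 1`, but the total is one less than there. -/
structure IsTrimmed (J : Finset α) (x : α → ℤ) : Prop where
  sum_add_one : ∑ i ∈ J, x i + 1 = (#J).choose 2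
  choose_two_le_sum : ∀ K ⊂ J, ((#K).choose 2 : ℤ) ≤ ∑ i ∈ K, x i

theorem IsTrimmed.nonempty (hx : IsTrimmed J x) : J.Nonempty := by
  rw [nonempty_iff_ne_empty]
  rintro rfl
  simpa using hx.sum_add_one

theorem isTrimmed_map {β : Type*} (e : β ↪ α) {J : Finset β} :
    IsTrimmed (J.map e) x ↔ IsTrimmed J (x ∘ e) := by
  constructor
  · rintro ⟨htotal, hbound⟩
    refine ⟨by simpa using htotal, fun K hK ↦ ?_⟩
    simpa using hbound (K.map e) (map_ssubset_map.2 hK)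
  · rintro ⟨htotal, hbound⟩
    refine ⟨by simpa using htotal, fun K hK ↦ ?_⟩
    obtain ⟨K, -, rfl⟩ := subset_map_iff.1 hK.subset
    simpa using hbound K (map_ssubset_map.1 hK)

theorem IsTrimmed.sum_lt [DecidableEq α] (hx : IsTrimmed J x) (hKJ : K ⊆ J) (hK : K.Nonempty) :
    ∑ i ∈ K, x i < (#K).choose 2 + #K * #(J \ K) := by
  have hcompl := hx.choose_two_le_sum (J \ K) (sdiff_ssubset hKJ hK)
  have htotal := hx.sum_add_one
  rw [← sum_sdiff hKJ, ← card_sdiff_add_card_eq_card hKJ, choose_two_add] at htotal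
  push_cast at htotal
  linarith

theorem IsTrimmed.choose_two_le_sum_add_card (hx : IsTrimmed J x) (hKJ : K ⊆ J) :
    ((#K).choose 2 : ℤ) ≤ ∑ i ∈ K, x i + #K := by
  rcases hKJ.eq_or_ssubset with rfl | hKJ
  · have hpos : (1 : ℤ) ≤ #K := mod_cast hx.nonempty.card_pos
    linarith [hx.sum_add_one]
  · linarith [hx.choose_two_le_sum K hKJ, Int.natCast_nonneg #K]

end Trimmed

section Laplacian

variable {α : Type*} [Fintype α]

/-- The Laplacian of the complete graph on `α`; adding a vector in its image to a chip configuration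
amounts to firing vertices. -/
def completeLaplacian : (α → ℤ) →+ (α → ℤ) where
  toFun f i := Fintype.card α * f i - ∑ j, f j
  map_zero' := by ext; simp
  map_add' f g := by ext; simp [sum_add_distrib]; ring

variable {f x d : α → ℤ}

theorem completeLaplacian_apply (f : α → ℤ) (i : α) :
    completeLaplacian f i = Fintype.card α * f i - ∑ j, f j := rfl

theorem sum_completeLaplacian (f : α → ℤ) (K : Finset α) :
    ∑ i ∈ K, completeLaplacian f i = Fintype.card α * ∑ i ∈ K, f i - #K * ∑ i, f i := by
  simp [completeLaplacian_apply, mul_sum]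

theorem sum_univ_completeLaplacian (f : α → ℤ) : ∑ i, completeLaplacian f i = 0 := by
  simp [sum_completeLaplacian]

theorem exists_completeLaplacian_eq (hd : ∑ i, d i = 0) (i₀ : α)
    (hdvd : ∀ i, (Fintype.card α : ℤ) ∣ d i - d i₀) : ∃ f, completeLaplacian f = d := by
  have : Nonempty α := ⟨i₀⟩
  choose f hf using hdvd
  have hsum : ∑ i, f i = -d i₀ := by
    apply mul_left_cancel₀ (Nat.cast_ne_zero.2 Fintype.card_ne_zero : (Fintype.card α : ℤ) ≠ 0)
    rw [mul_sum, ← sum_congr rfl fun i _ ↦ hf i]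
    simp [hd]
  refine ⟨f, funext fun i ↦ ?_⟩
  rw [completeLaplacian_apply, hsum, ← hf]
  ring

/- `K` is the set where `f` is minimal. -/
theorem exists_sum_completeLaplacian_le [DecidableEq α] (hf : completeLaplacian f ≠ 0) :
    ∃ K : Finset α, K.Nonempty ∧ K ≠ univ ∧ ∑ i ∈ K, completeLaplacian f i ≤ -(#K * #Kᶜ) := by
  obtain ⟨i, hi⟩ := Function.ne_iff.1 hf
  have : Nonempty α := ⟨i⟩
  obtain ⟨i₀, hmin⟩ := Finite.exists_min f
  set K : Finset α := {i | f i = f i₀} with hK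
  have hsumK : ∑ i ∈ K, f i = #K * f i₀ := by
    rw [sum_congr rfl fun i hi ↦ (mem_filter.1 hi).2, sum_const, nsmul_eq_mul]
  have hsumKc : #Kᶜ * (f i₀ + 1) ≤ ∑ i ∈ Kᶜ, f i := by
    simpa using card_nsmul_le_sum Kᶜ f (f i₀ + 1) fun i hi ↦
      Int.add_one_le_iff.2 ((hmin i).lt_of_ne' (by simpa [hK] using hi))
  refine ⟨K, ⟨i₀, by simp [hK]⟩, fun hKuniv ↦ hi ?_, ?_⟩
  · have hconst (j : α) : f j = f i₀ := by
      have hj : j ∈ K := hKuniv ▸ mem_univ j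
      simpa [hK] using hj
    simp [completeLaplacian_apply, hconst]
  · rw [sum_completeLaplacian, ← sum_add_sum_compl K f, ← card_add_card_compl K, hsumK]
    push_cast
    linarith [mul_le_mul_of_nonneg_left hsumKc (Int.natCast_nonneg #K)]

theorem IsTrimmed.completeLaplacian_eq_zero (hx : IsTrimmed univ x)
    (hxf : IsTrimmed univ (x + completeLaplacian f)) : completeLaplacian f = 0 := by
  classical
  by_contra hf
  obtain ⟨K, hKne, hKuniv, hle⟩ := exists_sum_completeLaplacian_le hf
  have hlower := hxf.choose_two_le_sum K (ssubset_univ_iff.2 hKuniv)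
  have hupper := hx.sum_lt (subset_univ K) hKne
  simp only [Pi.add_apply, sum_add_distrib, ← compl_eq_univ_sdiff] at hlower hupper
  linarith

theorem sum_sq_add_completeLaplacian_indicator [DecidableEq α] (x : α → ℤ) (K : Finset α) :
    ∑ i, (x + completeLaplacian (fun i ↦ if i ∈ K then 1 else 0)) i ^ 2 =
      ∑ i, x i ^ 2 + 2 * (Fintype.card α * ∑ i ∈ K, x i - #K * ∑ i, x i) +
        Fintype.card α * #K * #Kᶜ := by
  have hexpand (i : α) :
      (x + completeLaplacian (fun i ↦ if i ∈ K then 1 else 0)) i ^ 2 =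
        x i ^ 2 - 2 * #K * x i + (#K : ℤ) ^ 2 +
          if i ∈ K then 2 * Fintype.card α * x i + ((Fintype.card α : ℤ) ^ 2 -
            2 * Fintype.card α * #K) else 0 := by
    simp only [Pi.add_apply, completeLaplacian_apply, sum_boole, filter_mem_eq_inter, univ_inter]
    split_ifs <;> simp <;> ring
  simp only [hexpand, sum_add_distrib, sum_sub_distrib, sum_ite_mem, univ_inter, ← mul_sum,
    sum_const, nsmul_eq_mul, card_univ, ← card_add_card_compl K]
  push_cast
  ring

theorem sum_sq_add_completeLaplacian_indicator_lt [DecidableEq α] {K : Finset α}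
    (hx : ∑ i, x i + 1 = (Fintype.card α).choose 2) (hKuniv : K ≠ univ)
    (hK : ∑ i ∈ K, x i < (#K).choose 2) :
    ∑ i, (x + completeLaplacian (fun i ↦ if i ∈ K then 1 else 0)) i ^ 2 < ∑ i, x i ^ 2 := by
  have hpos : 0 < (#Kᶜ : ℤ) := by
    simpa [card_pos, nonempty_iff_ne_empty] using hKuniv
  have hchoose (k : ℕ) : 2 * (k.choose 2 : ℤ) = k * (k - 1) := by
    qify
    rw [Nat.cast_choose_two]
    ring
  have hcard : (Fintype.card α : ℤ) = #K + #Kᶜ := mod_cast (card_add_card_compl K).symm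
  rw [sum_sq_add_completeLaplacian_indicator, eq_sub_of_add_eq hx]
  have hmul := mul_le_mul_of_nonneg_left (Int.add_one_le_iff.2 hK)
    (Int.natCast_nonneg (Fintype.card α))
  linear_combination 2 * hmul + Fintype.card α * hchoose (#K) - #K * hchoose (Fintype.card α) +
    2 * hpos - (Fintype.card α * #K + 2 : ℤ) * hcard

theorem exists_isTrimmed_add_completeLaplacian (hx : ∑ i, x i + 1 = (Fintype.card α).choose 2) :
    ∃ f, IsTrimmed univ (x + completeLaplacian f) := by
  classical
  let energy (f : α → ℤ) : ℕ := (∑ i, (x + completeLaplacian f) i ^ 2).toNat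
  set f := Function.argmin energy
  have htotal : ∑ i, (x + completeLaplacian f) i + 1 = (Fintype.card α).choose 2 := by
    simpa [sum_add_distrib, sum_univ_completeLaplacian] using hx
  refine ⟨f, htotal, fun K hK ↦ ?_⟩
  by_contra! hlt
  have hdecrease := sum_sq_add_completeLaplacian_indicator_lt htotal hK.ne hlt
  rw [add_assoc, ← map_add] at hdecrease
  refine Function.not_lt_argmin energy (f + fun i ↦ if i ∈ K then 1 else 0) ?_
  have hnonneg (y : α → ℤ) : 0 ≤ ∑ i, y i ^ 2 := by positivity
  exact (Int.toNat_lt_toNat ((hnonneg _).trans_lt hdecrease)).2 hdecrease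

end Laplacian

section Count

variable {α : Type*} [Fintype α] {x y : α → ℤ}

/-- The residues modulo `|α|` of the differences `x i - x i₀`, with `i` ranging over the vertices
other than `i₀` and `i₁`. Together with the sum of `x` they determine the class of `x` modulo the
image of the Laplacian. -/
def laplacianResidue [DecidableEq α] (i₀ i₁ : α) (x : α → ℤ) (i : ({i₀, i₁}ᶜ : Finset α)) :
    ZMod (Fintype.card α) :=
  ((x i - x i₀ : ℤ) : ZMod (Fintype.card α))

theorem laplacianResidue_add_completeLaplacian [DecidableEq α] (i₀ i₁ : α) (x f : α → ℤ) :
    laplacianResidue i₀ i₁ (x + completeLaplacian f) = laplacianResidue i₀ i₁ x := by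
  ext i
  simp [laplacianResidue, completeLaplacian_apply]

theorem exists_add_completeLaplacian_eq [DecidableEq α] {i₀ i₁ : α} (hi : i₀ ≠ i₁)
    (hsum : ∑ i, x i = ∑ i, y i) (hres : laplacianResidue i₀ i₁ x = laplacianResidue i₀ i₁ y) :
    ∃ f, x + completeLaplacian f = y := by
  have hd : ∑ i, (y - x) i = 0 := by simp [hsum]
  have hdvd_of_ne (i : α) (hi₁ : i ≠ i₁) :
      (Fintype.card α : ℤ) ∣ (y - x) i - (y - x) i₀ := by
    rcases eq_or_ne i i₀ with rfl | hi₀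
    · simp
    · have := congrFun hres ⟨i, by simp [hi₀, hi₁]⟩
      rw [laplacianResidue, laplacianResidue, ZMod.intCast_eq_intCast_iff_dvd_sub] at this
      simpa [sub_sub_sub_comm] using this
  have hdvd_sum : (Fintype.card α : ℤ) ∣ ∑ i, ((y - x) i - (y - x) i₀) := by
    simp [sum_sub_distrib _ fun _ ↦ (y - x) i₀, hd, -Pi.sub_apply]
  have hdvd (i : α) : (Fintype.card α : ℤ) ∣ (y - x) i - (y - x) i₀ := by
    rcases eq_or_ne i i₁ with rfl | hi₁
    · rw [← add_sum_erase _ _ (mem_univ i)] at hdvd_sum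
      exact (dvd_add_left (dvd_sum fun j hj ↦ hdvd_of_ne j (ne_of_mem_erase hj))).1 hdvd_sum
    · exact hdvd_of_ne i hi₁
  obtain ⟨f, hf⟩ := exists_completeLaplacian_eq hd i₀ hdvd
  exact ⟨f, by rw [hf, add_sub_cancel]⟩

theorem exists_sum_eq_laplacianResidue_eq [DecidableEq α] {i₀ i₁ : α} (hi : i₀ ≠ i₁) (t : ℤ)
    (w : ({i₀, i₁}ᶜ : Finset α) → ZMod (Fintype.card α)) :
    ∃ x : α → ℤ, ∑ i, x i = t ∧ laplacianResidue i₀ i₁ x = w := by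
  choose lift hlift using ZMod.intCast_surjective (n := Fintype.card α)
  let z (i : α) : ℤ := if h : i ∈ ({i₀, i₁}ᶜ : Finset α) then lift (w ⟨i, h⟩) else 0
  refine ⟨Function.update z i₁ (t - ∑ i ∈ univ \ {i₁}, z i), ?_, funext fun ⟨i, hmem⟩ ↦ ?_⟩
  · rw [sum_update_of_mem (mem_univ i₁), sub_add_cancel]
  · have hne : i ≠ i₀ ∧ i ≠ i₁ := by simpa using hmem
    simp [laplacianResidue, Function.update_of_ne hi, z, hlift, hne]

theorem card_isTrimmed_univ_of_nontrivial [Nontrivial α] :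
    Nat.card {x : α → ℤ // IsTrimmed univ x} = Fintype.card α ^ (Fintype.card α - 2) := by
  classical
  obtain ⟨i₀, i₁, hi⟩ := exists_pair_ne α
  let residue (x : {x : α → ℤ // IsTrimmed univ x}) := laplacianResidue i₀ i₁ x
  have hbij : Function.Bijective residue := by
    constructor
    · rintro ⟨x, hx⟩ ⟨y, hy⟩ hxy
      have hsum : ∑ i, x i = ∑ i, y i := by linarith [hx.sum_add_one, hy.sum_add_one]
      obtain ⟨f, rfl⟩ := exists_add_completeLaplacian_eq hi hsum hxy
      simp [hx.completeLaplacian_eq_zero hy]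
    · intro w
      obtain ⟨x, hx, rfl⟩ := exists_sum_eq_laplacianResidue_eq hi ((Fintype.card α).choose 2 - 1) w
      obtain ⟨f, hf⟩ := exists_isTrimmed_add_completeLaplacian (x := x) (by rw [hx]; ring)
      exact ⟨⟨_, hf⟩, laplacianResidue_add_completeLaplacian i₀ i₁ x f⟩
  rw [Nat.card_congr (Equiv.ofBijective residue hbij), Nat.card_fun, Nat.card_zmod,
    Nat.card_eq_fintype_card, Fintype.card_coe, card_compl, card_pair hi]

theorem isTrimmed_univ_iff_of_unique [Unique α] : IsTrimmed univ x ↔ x = -1 := by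
  constructor
  · intro hx
    ext i
    rw [Unique.eq_default i]
    have hsum : x default + 1 = 0 := by simpa using hx.sum_add_one
    exact eq_neg_of_add_eq_zero_left hsum
  · rintro rfl
    refine ⟨by simp, fun K hK ↦ ?_⟩
    rw [univ_unique, ssubset_singleton_iff] at hK
    simp [hK]

theorem card_isTrimmed_univ (α : Type*) [Fintype α] :
    Nat.card {x : α → ℤ // IsTrimmed univ x} = treeCount (Fintype.card α) := by
  rcases subsingleton_or_nontrivial α with hsub | hnontrivial
  · rcases isEmpty_or_nonempty α with hempty | hnonempty
    · have : IsEmpty {x : α → ℤ // IsTrimmed univ x} :=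
        ⟨fun x ↦ by simpa using x.2.nonempty⟩
      rw [Nat.card_of_isEmpty, Fintype.card_eq_zero, treeCount_zero]
    · obtain ⟨_⟩ := nonempty_unique α
      simp only [isTrimmed_univ_iff_of_unique, Nat.card_unique, Fintype.card_unique]
      rfl
  · rw [card_isTrimmed_univ_of_nontrivial, treeCount, if_neg Fintype.card_ne_zero]

end Count

section Split

variable {α : Type*} [Fintype α] [DecidableEq α] {r : α} {J J' K : Finset α} {x : α → ℤ}

/-- `x` is glued from trimmed points on the block `J` containing `r` and on its complement. These
are the counterparts of the spanning forests with two components `J ∋ r` and `Jᶜ`. -/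
structure IsSplit (r : α) (J : Finset α) (x : α → ℤ) : Prop where
  mem : r ∈ J
  isTrimmed_sub_single : IsTrimmed J (x - Pi.single r 1)
  isTrimmed_compl_sub_card : IsTrimmed Jᶜ (x - fun _ ↦ (#J : ℤ))

theorem IsSplit.ne_univ (hx : IsSplit r J x) : J ≠ univ := by
  rintro rfl
  simpa using hx.isTrimmed_compl_sub_card.nonempty

theorem IsSplit.sum_eq (hx : IsSplit r J x) : ∑ i ∈ J, x i = (#J).choose 2 := by
  simpa [sum_pi_single', hx.mem] using hx.isTrimmed_sub_single.sum_add_one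

theorem IsSplit.choose_two_add_ite_le_sum (hx : IsSplit r J x) (hJK : ¬J ⊆ K) :
    ((#K).choose 2 : ℤ) + (if r ∈ K then 1 else 0) ≤ ∑ i ∈ K, x i := by
  have hssub : K ∩ J ⊂ J := inter_subset_right.ssubset_of_ne (mt inter_eq_right.1 hJK)
  have hinter := hx.isTrimmed_sub_single.choose_two_le_sum (K ∩ J) hssub
  have hsubset : K \ J ⊆ Jᶜ := by grind [mem_compl]
  have hsdiff := hx.isTrimmed_compl_sub_card.choose_two_le_sum_add_card hsubset
  have hcard : (#(K \ J) : ℤ) * (#(K ∩ J) + 1) ≤ #(K \ J) * #J := by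
    gcongr
    exact_mod_cast card_lt_card hssub
  simp only [Pi.sub_apply, sum_sub_distrib, sum_pi_single', mem_inter, hx.mem, and_true, sum_const,
    nsmul_eq_mul] at hinter hsdiff
  rw [← sum_inter_add_sum_sdiff K J, ← card_inter_add_card_sdiff K J, choose_two_add]
  push_cast
  linarith

theorem IsSplit.choose_two_le_sum_of_subset (hx : IsSplit r J x) (hJK : J ⊆ K) (hK : K ≠ univ) :
    ((#K).choose 2 : ℤ) ≤ ∑ i ∈ K, x i := by
  have hssub : K \ J ⊂ Jᶜ := by
    rw [← compl_sdiff_compl]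
    exact sdiff_ssubset (compl_subset_compl.2 hJK) (by simpa [nonempty_iff_ne_empty] using hK)
  have hsdiff := hx.isTrimmed_compl_sub_card.choose_two_le_sum (K \ J) hssub
  simp only [Pi.sub_apply, sum_sub_distrib, sum_const, nsmul_eq_mul] at hsdiff
  rw [← sum_sdiff hJK, hx.sum_eq, ← card_sdiff_add_card_eq_card hJK, choose_two_add]
  push_cast
  linarith

theorem IsSplit.isTrimmed_univ (hx : IsSplit r J x) : IsTrimmed univ x where
  sum_add_one := by
    have hcompl := hx.isTrimmed_compl_sub_card.sum_add_one
    simp only [Pi.sub_apply, sum_sub_distrib, sum_const, nsmul_eq_mul] at hcompl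
    rw [← sum_add_sum_compl J, hx.sum_eq, card_univ, ← card_add_card_compl J, choose_two_add]
    push_cast
    linarith
  choose_two_le_sum K hK := by
    by_cases hJK : J ⊆ K
    · exact hx.choose_two_le_sum_of_subset hJK hK.ne
    · exact le_of_add_le_of_nonneg_left (hx.choose_two_add_ite_le_sum hJK) (by positivity)

theorem IsSplit.subset (hx : IsSplit r J x) (hx' : IsSplit r J' x) : J ⊆ J' := by
  by_contra hJ
  have hlt := hx.choose_two_add_ite_le_sum hJ
  rw [if_pos hx'.mem, hx'.sum_eq] at hlt
  exact (lt_add_one _).not_ge hlt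

theorem IsSplit.unique (hx : IsSplit r J x) (hx' : IsSplit r J' x) : J = J' :=
  (hx.subset hx').antisymm (hx'.subset hx)

theorem IsTrimmed.exists_isSplit (hx : IsTrimmed univ x) (hr : r ∈ K)
    (htight : ∑ i ∈ K, x i = (#K).choose 2) : ∃ J, IsSplit r J x := by
  obtain ⟨J, hJ⟩ := exists_minimal_of_wellFoundedLT
    (fun J : Finset α ↦ r ∈ J ∧ ∑ i ∈ J, x i = (#J).choose 2) ⟨K, hr, htight⟩
  obtain ⟨hrJ, hJsum⟩ := hJ.prop
  refine ⟨J, hrJ, ⟨?_, fun L hL ↦ ?_⟩, ⟨?_, fun L hL ↦ ?_⟩⟩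
  · simp [sum_pi_single', hrJ, hJsum]
  · have hle := hx.choose_two_le_sum L (hL.trans_subset (subset_univ J))
    by_cases hrL : r ∈ L
    · have hne : ∑ i ∈ L, x i ≠ (#L).choose 2 := fun heq ↦
        hJ.not_prop_of_lt hL ⟨hrL, heq⟩
      simpa [sum_pi_single', hrL] using Int.le_sub_one_of_lt (hle.lt_of_ne' hne)
    · simpa [sum_pi_single', hrL] using hle
  · have htotal := hx.sum_add_one
    rw [← sum_add_sum_compl J, hJsum, card_univ, ← card_add_card_compl J, choose_two_add] at htotal
    simp only [Pi.sub_apply, sum_sub_distrib, sum_const, nsmul_eq_mul]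
    push_cast at htotal
    linarith
  · have hdisj : Disjoint J L := disjoint_compl_right.mono_right hL.subset
    obtain ⟨i, hiJ, hiL⟩ := exists_of_ssubset hL
    have hunion : J ∪ L ⊂ univ :=
      (ssubset_iff_of_subset (subset_univ _)).2 ⟨i, mem_univ i, by simp_all⟩
    have hle := hx.choose_two_le_sum _ hunion
    rw [card_union_of_disjoint hdisj, sum_union hdisj, hJsum, choose_two_add] at hle
    simp only [Pi.sub_apply, sum_sub_distrib, sum_const, nsmul_eq_mul]
    push_cast at hle
    linarith

theorem card_isSplit (hr : r ∈ J) :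
    Nat.card {x // IsSplit r J x} = treeCount #J * treeCount #Jᶜ := by
  let e := (Equiv.subRight (J.piecewise (Pi.single r 1) fun _ ↦ (#J : ℤ))).trans
    (Equiv.piEquivPiSubtypeProd (· ∈ J) fun _ ↦ ℤ)
  have he (x : α → ℤ) : IsSplit r J x ↔ IsTrimmed univ (e x).1 ∧ IsTrimmed univ (e x).2 := by
    have hleft : (e x).1 = (x - Pi.single r 1) ∘ Function.Embedding.subtype (· ∈ J) := by
      ext i
      simp [e]
    have hright : (e x).2 = (x - fun _ ↦ (#J : ℤ)) ∘ Function.Embedding.subtype (· ∉ J) := by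
      ext i
      simp [e, i.2]
    have hJ : univ.map (Function.Embedding.subtype (· ∈ J)) = J := by ext; simp
    have hJc : univ.map (Function.Embedding.subtype (· ∉ J)) = Jᶜ := by ext; simp
    rw [hleft, hright, ← isTrimmed_map, ← isTrimmed_map, hJ, hJc]
    exact ⟨fun hx ↦ ⟨hx.2, hx.3⟩, fun hx ↦ ⟨hr, hx.1, hx.2⟩⟩
  rw [Nat.card_congr ((e.subtypeEquiv he).trans Equiv.subtypeProdEquivProd), Nat.card_prod,
    card_isTrimmed_univ, card_isTrimmed_univ]
  simp [Fintype.card_subtype_compl, card_compl]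

end Split

section Internal

variable {α : Type*} [Fintype α] {r : α} {x : α → ℤ}

/-- `x` is a lattice point of the internal permutohedron: the lower bounds `C(|K|, 2)` hold for all
proper subsets `K`, but the total is two less than for the permutohedron. By complementation these
are the exponents of the top-degree monomials of the internal bizonotopal algebra. -/
structure IsInternal (x : α → ℤ) : Prop where
  sum_add_two : ∑ i, x i + 2 = (Fintype.card α).choose 2
  choose_two_le_sum : ∀ K : Finset α, K ≠ univ → ((#K).choose 2 : ℤ) ≤ ∑ i ∈ K, x i

theorem isInternal_sub_single_iff [DecidableEq α] :
    IsInternal (x - Pi.single r 1) ↔ IsTrimmed univ x ∧ ¬∃ J, IsSplit r J x := by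
  constructor
  · rintro ⟨htotal, hbound⟩
    simp only [Pi.sub_apply, sum_sub_distrib, sum_pi_single', mem_univ, if_true] at htotal hbound
    refine ⟨⟨by rw [card_univ]; linarith, fun K hK ↦ ?_⟩, ?_⟩
    · exact (hbound K hK.ne).trans (sub_le_self _ (by positivity))
    · rintro ⟨J, hJ⟩
      have hle := hbound J hJ.ne_univ
      rw [hJ.sum_eq, if_pos hJ.mem] at hle
      exact (sub_one_lt _).not_ge hle
  · rintro ⟨hx, hsplit⟩
    refine ⟨?_, fun K hK ↦ ?_⟩
    · simp only [Pi.sub_apply, sum_sub_distrib, sum_pi_single', mem_univ, if_true]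
      rw [← card_univ, ← hx.sum_add_one]
      ring
    · have hle := hx.choose_two_le_sum K (ssubset_univ_iff.2 hK)
      by_cases hrK : r ∈ K
      · have hne : ∑ i ∈ K, x i ≠ (#K).choose 2 := fun heq ↦ hsplit (hx.exists_isSplit hrK heq)
        simpa [sum_pi_single', hrK] using Int.le_sub_one_of_lt (hle.lt_of_ne' hne)
      · simpa [sum_pi_single', hrK] using hle

theorem finite_setOf_isTrimmed_univ : {x : α → ℤ | IsTrimmed univ x}.Finite := by
  cases isEmpty_or_nonempty α
  · exact Set.toFinite _
  apply Set.finite_of_ncard_ne_zero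
  rw [← Nat.card_coe_set_eq]
  refine (card_isTrimmed_univ α).trans_ne ?_
  simp [treeCount, Fintype.card_ne_zero]

theorem ncard_setOf_exists_isSplit [DecidableEq α] (r : α) :
    {x | ∃ J, IsSplit r J x}.ncard = ∑ J : Finset α with r ∈ J, treeCount #J * treeCount #Jᶜ := by
  have hunion : {x | ∃ J, IsSplit r J x} =
      ⋃ J ∈ (({J | r ∈ J} : Finset (Finset α)) : Set (Finset α)), {x | IsSplit r J x} := by
    ext x
    simpa using exists_congr fun J ↦ (and_iff_right_of_imp IsSplit.mem).symm
  have hfinite (J : Finset α) : {x | IsSplit r J x}.Finite :=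
    finite_setOf_isTrimmed_univ.subset fun x hx ↦ hx.isTrimmed_univ
  rw [hunion, Set.Finite.ncard_biUnion (finite_toSet _) fun J _ ↦ hfinite J,
    finsum_mem_coe_finset]
  · exact sum_congr rfl fun J hJ ↦ card_isSplit (mem_filter.1 hJ).2
  · intro J _ J' _ hne
    exact Set.disjoint_left.2 fun x hx hx' ↦ hne (hx.unique hx')

theorem ncard_isInternal_add_sum [DecidableEq α] (r : α) :
    {x : α → ℤ | IsInternal x}.ncard + ∑ J : Finset α with r ∈ J, treeCount #J * treeCount #Jᶜ =
      treeCount (Fintype.card α) := by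
  have hshift : {x : α → ℤ | IsInternal x}.ncard =
      {x : α → ℤ | IsInternal (x - Pi.single r 1)}.ncard :=
    (Nat.card_congr ((Equiv.subRight (Pi.single r 1)).subtypeEquiv fun _ ↦ Iff.rfl)).symm
  have hdiff : {x : α → ℤ | IsInternal (x - Pi.single r 1)} =
      {x | IsTrimmed univ x} \ {x | ∃ J, IsSplit r J x} :=
    Set.ext fun _ ↦ isInternal_sub_single_iff
  have hsubset : {x | ∃ J, IsSplit r J x} ⊆ {x | IsTrimmed univ x} :=
    fun x ⟨_, hJ⟩ ↦ hJ.isTrimmed_univ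
  rw [hshift, hdiff, ← ncard_setOf_exists_isSplit,
    Set.ncard_sdiff_add_ncard_of_subset hsubset finite_setOf_isTrimmed_univ]
  exact card_isTrimmed_univ α

theorem ncard_isInternal (hα : 4 ≤ Fintype.card α) :
    {x : α → ℤ | IsInternal x}.ncard =
      (Fintype.card α - 2).choose 2 * Fintype.card α ^ (Fintype.card α - 4) := by
  classical
  obtain ⟨r⟩ : Nonempty α := Fintype.card_pos_iff.1 (by lia)
  have hcount := ncard_isInternal_add_sum r
  have hpairs := two_mul_sum_treeCount_mul_treeCount_compl r
  have habel := pow_four_mul_markedTreePairs_zero_zero (n := Fintype.card α) (by lia)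
  rw [← hpairs] at habel
  obtain ⟨p, hp⟩ := Nat.exists_eq_add_of_le' hα
  rw [hp, treeCount, if_neg (by lia)] at hcount
  rw [hp] at habel ⊢
  qify at hcount ⊢
  rw [Nat.cast_choose_two]
  have hpos : (0 : ℚ) < (p + 4) ^ 4 := by positivity
  apply mul_left_cancel₀ hpos.ne'
  push_cast at hcount habel ⊢
  linear_combination ((p : ℚ) + 4) ^ 4 * hcount - habel / 2

theorem isInternal_natCast_iff (hα : 2 ≤ (Fintype.card α).choose 2) (b : α → ℕ) :
    IsInternal (fun i ↦ (b i : ℤ)) ↔ ∑ i, b i = (Fintype.card α).choose 2 - 2 ∧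
      ∀ I : Finset α, I.Nonempty →
        ∑ i ∈ I, b i + 2 ≤ (#I).choose 2 + #I * (Fintype.card α - #I) := by
  classical
  have hchoose (I : Finset α) :
      (Fintype.card α).choose 2 = (#I).choose 2 + (#Iᶜ).choose 2 + #I * #Iᶜ := by
    rw [← choose_two_add, card_add_card_compl]
  constructor
  · rintro ⟨htotal, hbound⟩
    norm_cast at htotal hbound
    refine ⟨by lia, fun I hI ↦ ?_⟩
    have hle := hbound Iᶜ (by simpa [← nonempty_iff_ne_empty] using hI)
    rw [← card_compl]
    linarith [hchoose I, sum_add_sum_compl I b]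
  · rintro ⟨htotal, hbound⟩
    refine ⟨by norm_cast; lia, fun K hK ↦ ?_⟩
    have hle := hbound Kᶜ (by simpa [nonempty_iff_ne_empty] using hK)
    rw [← card_compl] at hle
    have hsplit := hchoose Kᶜ
    rw [compl_compl] at hsplit hle
    norm_cast
    linarith [sum_add_sum_compl K b, Nat.sub_add_cancel hα]

theorem ncard_natCast_isInternal [Nontrivial α] :
    {b : α → ℕ | IsInternal (fun i ↦ (b i : ℤ))}.ncard = {x : α → ℤ | IsInternal x}.ncard := by
  refine Set.ncard_preimage_of_injective_subset_range (f := fun (b : α → ℕ) i ↦ (b i : ℤ))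
    (fun b c h ↦ funext fun i ↦ Nat.cast_injective (congrFun h i)) fun x hx ↦ ?_
  have hnonneg (i : α) : 0 ≤ x i := by
    simpa using hx.choose_two_le_sum {i} (singleton_ne_univ i)
  exact ⟨fun i ↦ (x i).toNat, funext fun i ↦ Int.toNat_of_nonneg (hnonneg i)⟩

end Internal

/-- The dimension of the top graded component (of degree `C(n,2) − 2`) of the
internal bizonotopal algebra of the complete graph `K_n`, for `n ≥ 4`, equals
`C(n−2, 2) · n^{n−4}`. -/
theorem internal_top_dim_complete_graph (n : ℕ) (hn : 4 ≤ n) :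
    Set.ncard {b : Fin n → ℕ |
        (∑ i : Fin n, b i = n * (n - 1) / 2 - 2) ∧
        ∀ I : Finset (Fin n), I.Nonempty →
          ∑ i ∈ I, b i + 2 ≤ I.card * (I.card - 1) / 2 + I.card * (n - I.card)} =
      (n - 2) * (n - 3) / 2 * n ^ (n - 4) := by
  have : Nontrivial (Fin n) := Fin.nontrivial_iff_two_le.2 (by lia)
  have htwo : 2 ≤ n.choose 2 := le_trans (by decide) (Nat.choose_le_choose 2 hn)
  have hncard := ncard_isInternal (α := Fin n) (by simpa)
  rw [← ncard_natCast_isInternal] at hncard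
  simpa only [isInternal_natCast_iff (α := Fin n) (by simpa), Fintype.card_fin,
    Nat.choose_two_right, Nat.sub_sub] using hncard
end
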